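/- arXiv:1402.0156 — 3 statements merged into one kernel-verified Lean document; each statement's English description precedes it below -/
import Mathlib

section
/- There exist universal constants C > 0 and ε_0 > 0 such that for every finite reversible, irreducible, aperiodic Markov chain as above, every 0 < ε ≤ ε_0, and all sets A ⊆ S ⊆ G with S nonempty and π(A) ≤ ε·π(S), the harmonic measure from stationarity satisfies h_S(A) = ∑_{x∈A} h_S(x) ≤ C · ε · log(1/ε) / (1−λ). -/
open MeasureTheory Finset
open scoped ENNReal

namespace HM

variable {G : Type*} [Fintype G] [DecidableEq G]

/-- `P` is a stochastic (transition) matrix. -/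
def IsStochastic (P : Matrix G G ℝ) : Prop :=
  (∀ x y, 0 ≤ P x y) ∧ ∀ x, ∑ y, P x y = 1

/-- Irreducibility: every state reaches every other state. -/
def IsIrreducible (P : Matrix G G ℝ) : Prop :=
  ∀ x y : G, ∃ t : ℕ, 0 < (P ^ t) x y

/-- Aperiodicity: the gcd of return times is `1` at every state. -/
def IsAperiodic (P : Matrix G G ℝ) : Prop :=
  ∀ x : G, ∀ d : ℕ, (∀ t : ℕ, 0 < (P ^ t) x x → d ∣ t) → d = 1

/-- `P` is reversible with respect to the full-support probability vector `pi`. -/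
def IsReversible (P : Matrix G G ℝ) (pi : G → ℝ) : Prop :=
  (∀ x, 0 < pi x) ∧ (∑ x, pi x = 1) ∧ ∀ x y, pi x * P x y = pi y * P y x

variable [MeasurableSpace G]

/-- `μ x` is the law of the Markov chain with transition matrix `P` started at `x`:
all finite-dimensional (cylinder) probabilities are given by products of transition
probabilities. -/
def IsMarkovChain (P : Matrix G G ℝ) (μ : G → Measure (ℕ → G)) : Prop :=
  (∀ x, IsProbabilityMeasure (μ x)) ∧
  ∀ (x : G) (t : ℕ) (w : ℕ → G),
    μ x {ω | ∀ i ≤ t, ω i = w i} =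
      ENNReal.ofReal ((if w 0 = x then 1 else 0) * ∏ i ∈ Finset.range t, P (w i) (w (i + 1)))

/-- Hitting time `T_S = inf {t ≥ 0 : X_t ∈ S}`, with value `⊤` if `S` is never hit. -/
noncomputable def hit (S : Set G) (ω : ℕ → G) : ℕ∞ :=
  sInf ((↑) '' {n : ℕ | ω n ∈ S})

/-- Return time `T_S^+ = inf {t ≥ 1 : X_t ∈ S}`, with value `⊤` if `S` is never hit. -/
noncomputable def hitPlus (S : Set G) (ω : ℕ → G) : ℕ∞ :=
  sInf ((↑) '' {n : ℕ | 1 ≤ n ∧ ω n ∈ S})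

/-- The event `X_{T_S} = x` (in particular `T_S < ∞`). -/
def hitsAt (S : Set G) (x : G) : Set (ℕ → G) :=
  {ω | ∃ n : ℕ, hit S ω = (n : ℕ∞) ∧ ω n = x}

/-- Harmonic measure on `S` from `y`: `h_{y,S}(x) = Pr_y[X_{T_S} = x]`. -/
noncomputable def harm (μ : G → Measure (ℕ → G)) (S : Set G) (y x : G) : ℝ :=
  (μ y (hitsAt S x)).toReal

/-- Harmonic measure on `S` from the stationary distribution:
`h_S(x) = ∑_y π(y) h_{y,S}(x)`. -/
noncomputable def harmStat (pi : G → ℝ) (μ : G → Measure (ℕ → G)) (S : Set G) (x : G) : ℝ :=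
  ∑ y, pi y * harm μ S y x

/-- `π(S) = ∑_{x ∈ S} π(x)`. -/
noncomputable def piOf (pi : G → ℝ) (S : Set G) : ℝ :=
  ∑ x, S.indicator pi x

/-- `λ = max_{j > 1} |λ_j|`, via the variational characterization: the largest absolute
value of the quadratic form of `P` on the orthogonal complement of the constants in
`L²(π)`.  For a reversible chain this equals the largest absolute value of a
non-Perron eigenvalue of `P`. -/
noncomputable def lam (P : Matrix G G ℝ) (pi : G → ℝ) : ℝ :=
  sSup {r : ℝ | ∃ f : G → ℝ, ∑ x, pi x * f x = 0 ∧ ∑ x, pi x * f x ^ 2 = 1 ∧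
    r = |∑ x, pi x * (f x * ∑ y, P x y * f y)|}

/-- `π_min = min_x π(x)`. -/
noncomputable def pimin (pi : G → ℝ) : ℝ := ⨅ x, pi x

/-- `π_max = max_x π(x)`. -/
noncomputable def pimax (pi : G → ℝ) : ℝ := ⨆ x, pi x

/-- `u(P) = min_{x ≠ y} Pr_x[T_y < T_x^+]`. -/
noncomputable def uP (μ : G → Measure (ℕ → G)) : ℝ :=
  sInf {r : ℝ | ∃ x y : G, x ≠ y ∧
    r = (μ x {ω | hit {y} ω < hitPlus {x} ω}).toReal}

/-- `E_x[T_S^+]` (as an extended nonnegative real, then converted to `ℝ`). -/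
noncomputable def expHitPlus (μ : G → Measure (ℕ → G)) (S : Set G) (x : G) : ℝ :=
  (∫⁻ ω, (hitPlus S ω : ℝ≥0∞) ∂ μ x).toReal

/-- The number of distinct states visited strictly before the return time `T_S^+`,
i.e. `|{X_0, X_1, …, X_{T_S^+ − 1}}|`. -/
noncomputable def visited (S : Set G) (ω : ℕ → G) : ℕ :=
  Set.ncard {g : G | ∃ n : ℕ, (n : ℕ∞) < hitPlus S ω ∧ ω n = g}




set_option linter.unusedSectionVars false

section Helpers
variable {G : Type*} [Fintype G] [DecidableEq G]

lemma pi_marg {P : Matrix G G ℝ} {pi : G → ℝ} (hP : IsStochastic P) (hR : IsReversible P pi)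
    (f : G → ℝ) : ∑ x, ∑ y, pi x * P x y * f y = ∑ x, pi x * f x := by
  rw [Finset.sum_comm]
  refine Finset.sum_congr rfl fun y _ => ?_
  have : ∀ x, pi x * P x y * f y = pi y * f y * P y x := fun x => by
    rw [hR.2.2 x y]; ring
  simp_rw [this, ← Finset.mul_sum, hP.2 y, mul_one]

lemma pi_marg' {P : Matrix G G ℝ} {pi : G → ℝ} (hP : IsStochastic P)
    (f : G → ℝ) : ∑ x, ∑ y, pi x * P x y * f x = ∑ x, pi x * f x := by
  refine Finset.sum_congr rfl fun y _ => ?_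
  have : ∀ x, pi y * P y x * f y = pi y * f y * P y x := fun x => by ring
  simp_rw [this, ← Finset.mul_sum, hP.2 y, mul_one]

lemma form_sub {P : Matrix G G ℝ} {pi : G → ℝ} (hP : IsStochastic P) (hR : IsReversible P pi)
    (f : G → ℝ) (c : ℝ) (hc : c ^ 2 = 1) :
    ∑ x, ∑ y, pi x * P x y * (f x - c * f y) ^ 2 =
      2 * ∑ x, pi x * f x ^ 2 - 2 * c * ∑ x, pi x * (f x * ∑ y, P x y * f y) := by
  have h1 := pi_marg hP hR (fun x => f x ^ 2)
  have h2 := pi_marg' (pi := pi) hP (fun x => f x ^ 2)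
  have h3 : ∑ x, pi x * (f x * ∑ y, P x y * f y) = ∑ x, ∑ y, pi x * P x y * (f x * f y) := by
    refine Finset.sum_congr rfl fun x _ => ?_
    rw [Finset.mul_sum, Finset.mul_sum]
    exact Finset.sum_congr rfl fun y _ => by ring
  have h4 : ∑ x, ∑ y, pi x * P x y * (f x - c * f y) ^ 2 =
      ∑ x, ∑ y, pi x * P x y * f x ^ 2 + ∑ x, ∑ y, pi x * P x y * f y ^ 2
        - 2 * c * ∑ x, ∑ y, pi x * P x y * (f x * f y) := by
    simp only [Finset.mul_sum, ← Finset.sum_add_distrib, ← Finset.sum_sub_distrib]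
    refine Finset.sum_congr rfl fun x _ => Finset.sum_congr rfl fun y _ => ?_
    linear_combination (pi x * P x y * f y ^ 2) * hc
  rw [h4, h3]
  rw [h1, h2]; ring

lemma form_le {P : Matrix G G ℝ} {pi : G → ℝ} (hP : IsStochastic P) (hR : IsReversible P pi)
    (f : G → ℝ) :
    |∑ x, pi x * (f x * ∑ y, P x y * f y)| ≤ ∑ x, pi x * f x ^ 2 := by
  have h : ∀ c : ℝ, 0 ≤ ∑ x, ∑ y, pi x * P x y * (f x - c * f y) ^ 2 := fun c =>
    Finset.sum_nonneg fun x _ => Finset.sum_nonneg fun y _ =>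
      mul_nonneg (mul_nonneg (hR.1 x).le (hP.1 x y)) (sq_nonneg _)
  have h1 := h 1
  have h2 := h (-1)
  rw [form_sub hP hR f _ (by norm_num)] at h1 h2
  rw [abs_le]
  constructor <;> linarith

lemma lam_nonneg (P : Matrix G G ℝ) (pi : G → ℝ) : 0 ≤ lam P pi := by
  apply Real.sSup_nonneg
  rintro r ⟨f, -, -, rfl⟩
  exact abs_nonneg _

lemma lam_bdd {P : Matrix G G ℝ} {pi : G → ℝ} (hP : IsStochastic P) (hR : IsReversible P pi) :
    BddAbove {r : ℝ | ∃ f : G → ℝ, ∑ x, pi x * f x = 0 ∧ ∑ x, pi x * f x ^ 2 = 1 ∧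
    r = |∑ x, pi x * (f x * ∑ y, P x y * f y)|} := by
  refine ⟨1, ?_⟩
  rintro r ⟨f, -, h, rfl⟩
  exact h ▸ form_le hP hR f

lemma form_lam {P : Matrix G G ℝ} {pi : G → ℝ} (hP : IsStochastic P) (hR : IsReversible P pi)
    (f : G → ℝ) (hf : ∑ x, pi x * f x = 0) :
    ∑ x, pi x * (f x * ∑ y, P x y * f y) ≤ lam P pi * ∑ x, pi x * f x ^ 2 := by
  set N := ∑ x, pi x * f x ^ 2 with hN
  have hN0 : 0 ≤ N := Finset.sum_nonneg fun x _ => mul_nonneg (hR.1 x).le (sq_nonneg _)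
  rcases hN0.eq_or_lt with h0 | h0
  · have := form_le hP hR f
    rw [← hN, ← h0] at this
    rw [← h0, mul_zero]
    exact (le_abs_self _).trans this
  · have hs : (√N) ^ 2 = N := Real.sq_sqrt hN0
    have hs0 : 0 < √N := Real.sqrt_pos.2 h0
    have hm : |∑ x, pi x * ((f x / √N) * ∑ y, P x y * (f y / √N))| ≤ lam P pi := by
      apply le_csSup (lam_bdd hP hR)
      refine ⟨fun x => f x / √N, ?_, ?_, rfl⟩
      · simp only [← mul_div_assoc, ← Finset.sum_div, hf, zero_div]
      · simp only [div_pow, hs, ← mul_div_assoc, ← Finset.sum_div, ← hN]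
        exact div_self h0.ne'
    have he : ∑ x, pi x * ((f x / √N) * ∑ y, P x y * (f y / √N)) =
        (∑ x, pi x * (f x * ∑ y, P x y * f y)) / N := by
      rw [Finset.sum_div]
      refine Finset.sum_congr rfl fun x _ => ?_
      simp only [← mul_div_assoc, ← Finset.sum_div]
      field_simp
      rw [hs]
      ring
    rw [he] at hm
    have := (le_abs_self _).trans hm
    rwa [div_le_iff₀ h0] at this

lemma pow_edge {P : Matrix G G ℝ} (hP : IsStochastic P) (f : G → ℝ) (c : ℝ)
    (h : ∀ x y, 0 < P x y → f x = c * f y) :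
    ∀ t x y, 0 < (P ^ t) x y → f x = c ^ t * f y := by
  intro t
  have hnn : ∀ t x y, 0 ≤ (P ^ t) x y := by
    intro t
    induction t with
    | zero => intro x y; simp [Matrix.one_apply]; split_ifs <;> norm_num
    | succ n ih =>
      intro x y
      rw [pow_succ, Matrix.mul_apply]
      exact Finset.sum_nonneg fun z _ => mul_nonneg (ih _ _) (hP.1 _ _)
  induction t with
  | zero =>
    intro x y hxy
    rw [pow_zero, Matrix.one_apply] at hxy
    split_ifs at hxy with he
    · simp [he]
    · exact absurd hxy (lt_irrefl _)
  | succ n ih =>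
    intro x y hxy
    rw [pow_succ, Matrix.mul_apply] at hxy
    obtain ⟨z, -, hz⟩ := Finset.exists_lt_of_sum_lt (s := Finset.univ)
      (f := fun _ : G => (0 : ℝ)) (by simpa using hxy)
    have h1 : 0 < (P ^ n) x z := (hnn _ _ _).lt_of_ne fun e => by rw [← e] at hz; simp at hz
    have h2 : 0 < P z y := (hP.1 _ _).lt_of_ne fun e => by rw [← e] at hz; simp at hz
    rw [ih x z h1, h z y h2]; ring

lemma lam_lt_one {P : Matrix G G ℝ} {pi : G → ℝ} (hP : IsStochastic P) (hI : IsIrreducible P)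
    (hA : IsAperiodic P) (hR : IsReversible P pi) : lam P pi < 1 := by
  set K : Set (G → ℝ) := {f | ∑ x, pi x * f x = 0 ∧ ∑ x, pi x * f x ^ 2 = 1} with hK
  set F : (G → ℝ) → ℝ := fun f => |∑ x, pi x * (f x * ∑ y, P x y * f y)| with hF
  have hset : lam P pi = sSup (F '' K) := by
    unfold lam
    congr 1
    ext r
    constructor
    · rintro ⟨f, h1, h2, h3⟩
      exact ⟨f, ⟨h1, h2⟩, h3.symm⟩
    · rintro ⟨f, ⟨h1, h2⟩, h3⟩
      exact ⟨f, h1, h2, h3.symm⟩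
  rcases K.eq_empty_or_nonempty with he | hne
  · rw [hset, he]; simp
  have hFc : Continuous F := by fun_prop
  have hKc : IsCompact K := by
    have hcl : IsClosed K := by
      apply IsClosed.inter
      · exact isClosed_eq (by fun_prop) continuous_const
      · exact isClosed_eq (by fun_prop) continuous_const
    have hbox : IsCompact (Set.pi Set.univ fun x : G => Set.Icc (-√(1 / pi x)) (√(1 / pi x))) :=
      isCompact_univ_pi fun x => isCompact_Icc
    refine hbox.of_isClosed_subset hcl ?_
    rintro f ⟨-, h2⟩ x -
    have h3 : pi x * f x ^ 2 ≤ 1 := by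
      rw [← h2]
      exact Finset.single_le_sum (f := fun x => pi x * f x ^ 2)
        (fun y _ => mul_nonneg (hR.1 y).le (sq_nonneg _)) (Finset.mem_univ x)
    have h4 : f x ^ 2 ≤ 1 / pi x := by
      rw [le_div_iff₀ (hR.1 x)]; linarith
    have := Real.abs_le_sqrt h4
    exact abs_le.1 this
  obtain ⟨f, ⟨h1, h2⟩, h3⟩ := (hKc.image hFc).sSup_mem (hne.image F)
  rw [← hset] at h3
  rw [← h3]
  refine lt_of_le_of_ne (h2 ▸ form_le hP hR f) fun heq => ?_
  have key : ∃ c : ℝ, (c = 1 ∨ c = -1) ∧ c * ∑ x, pi x * (f x * ∑ y, P x y * f y) = 1 := by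
    rcases eq_or_eq_neg_of_abs_eq heq with h | h
    · exact ⟨1, Or.inl rfl, by rw [h]; norm_num⟩
    · exact ⟨-1, Or.inr rfl, by rw [h]; norm_num⟩
  obtain ⟨c, hc, hc1⟩ := key
  have hc2 : c ^ 2 = 1 := by rcases hc with rfl | rfl <;> norm_num
  have h0 : ∑ x, ∑ y, pi x * P x y * (f x - c * f y) ^ 2 = 0 := by
    rw [form_sub hP hR f c hc2, h2]; linarith
  have hedge : ∀ x y, 0 < P x y → f x = c * f y := by
    intro x y hxy
    have hnn : ∀ x y, 0 ≤ pi x * P x y * (f x - c * f y) ^ 2 := fun x y =>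
      mul_nonneg (mul_nonneg (hR.1 x).le (hP.1 x y)) (sq_nonneg _)
    have := (Finset.sum_eq_zero_iff_of_nonneg
      (fun x _ => Finset.sum_nonneg fun y _ => hnn x y)).1 h0 x (Finset.mem_univ _)
    have := (Finset.sum_eq_zero_iff_of_nonneg (fun y _ => hnn x y)).1 this y (Finset.mem_univ _)
    have h5 : (f x - c * f y) ^ 2 = 0 := by
      rcases mul_eq_zero.1 this with h | h
      · exact absurd h (mul_pos (hR.1 x) hxy).ne'
      · exact h
    have := pow_eq_zero_iff (two_ne_zero) |>.1 h5
    linarith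
  have hpow := pow_edge hP f c hedge
  have hfz : ∀ x, f x = 0 := by
    intro x
    rcases hc with rfl | rfl
    · have hconst : ∀ y, f y = f x := fun y => by
        obtain ⟨t, ht⟩ := hI y x
        simpa using hpow t y x ht
      simp_rw [hconst] at h1
      rw [← Finset.sum_mul, hR.2.1, one_mul] at h1
      exact h1
    · by_contra hx
      have := hA x 2 fun t ht => by
        have h6 := hpow t x x ht
        rcases Nat.even_or_odd t with he | ho
        · exact he.two_dvd
        · rw [ho.neg_one_pow] at h6
          exact absurd (by linarith) hx
      norm_num at this
  simp [hfz] at h2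

/-- survival function -/
noncomputable def surv (P : Matrix G G ℝ) (S : Set G) : ℕ → G → ℝ
  | 0 => Sᶜ.indicator 1
  | t + 1 => Sᶜ.indicator fun x => ∑ y, P x y * surv P S t y

lemma surv_mem (P : Matrix G G ℝ) (S : Set G) (t : ℕ) (x : G) (hx : x ∈ S) :
    surv P S t x = 0 := by
  cases t <;> simp [surv, hx]

lemma surv_nonneg {P : Matrix G G ℝ} (hP : IsStochastic P) (S : Set G) (t : ℕ) (x : G) :
    0 ≤ surv P S t x := by
  induction t generalizing x with
  | zero =>
    exact Set.indicator_nonneg (f := (1 : G → ℝ)) (fun _ _ => zero_le_one) _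
  | succ n ih =>
    exact Set.indicator_nonneg
      (fun x _ => Finset.sum_nonneg fun y _ => mul_nonneg (hP.1 _ _) (ih y)) _

lemma surv_mul (P : Matrix G G ℝ) (S : Set G) (i j : ℕ) (x : G) :
    surv P S i x * surv P S (j + 1) x = surv P S i x * ∑ y, P x y * surv P S j y := by
  by_cases hx : x ∈ S
  · simp [surv_mem P S i x hx]
  · simp [surv, hx]

lemma surv_shift {P : Matrix G G ℝ} {pi : G → ℝ} (hR : IsReversible P pi) (S : Set G)
    (i j : ℕ) : ∑ x, pi x * (surv P S (i + 1) x * surv P S j x) =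
      ∑ x, pi x * (surv P S i x * surv P S (j + 1) x) := by
  simp_rw [mul_comm (surv P S (i + 1) _), surv_mul, Finset.mul_sum]
  rw [Finset.sum_comm]
  refine Finset.sum_congr rfl fun x _ => Finset.sum_congr rfl fun y _ => ?_
  linear_combination (surv P S j y * surv P S i x) * hR.2.2 y x

lemma surv_add {P : Matrix G G ℝ} {pi : G → ℝ} (hR : IsReversible P pi) (S : Set G)
    (i j : ℕ) : ∑ x, pi x * (surv P S i x * surv P S j x) =
      ∑ x, pi x * surv P S (i + j) x := by
  induction i generalizing j with
  | zero =>
    refine Finset.sum_congr rfl fun x _ => ?_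
    by_cases hx : x ∈ S
    · simp [surv_mem P S _ x hx]
    · simp [surv, hx]
  | succ n ih => rw [surv_shift hR, ih, add_right_comm, add_assoc]

lemma surv_le {P : Matrix G G ℝ} {pi : G → ℝ} (hP : IsStochastic P) (hR : IsReversible P pi)
    (S : Set G) (t : ℕ) : ∑ x, pi x * surv P S (t + 1) x ≤ ∑ x, pi x * surv P S t x := by
  rw [← pi_marg hP hR (surv P S t)]
  refine Finset.sum_le_sum fun x _ => ?_
  simp_rw [mul_assoc, ← Finset.mul_sum]
  refine mul_le_mul_of_nonneg_left ?_ (hR.1 x).le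
  exact Set.indicator_le_self' (fun _ _ => Finset.sum_nonneg fun y _ =>
    mul_nonneg (hP.1 _ _) (surv_nonneg hP _ _ _)) x

lemma form_off {P : Matrix G G ℝ} {pi : G → ℝ} (hP : IsStochastic P) (hI : IsIrreducible P)
    (hA : IsAperiodic P) (hR : IsReversible P pi)
    (S : Set G) (g : G → ℝ) (hg : ∀ x ∈ S, g x = 0) :
    ∑ x, pi x * (g x * ∑ y, P x y * g y) ≤
      (1 - piOf pi S * (1 - lam P pi)) * ∑ x, pi x * g x ^ 2 := by
  set m := ∑ x, pi x * g x with hm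
  set N := ∑ x, pi x * g x ^ 2 with hN
  have hl := lam_lt_one hP hI hA hR
  have h1 : ∑ x, pi x * (g x - m) = 0 := by
    simp_rw [mul_sub, Finset.sum_sub_distrib, ← Finset.sum_mul, hR.2.1, ← hm]; ring
  have h2 : ∑ x, pi x * (g x - m) ^ 2 = N - m ^ 2 := by
    have : ∀ x, pi x * (g x - m) ^ 2 = pi x * g x ^ 2 - 2 * m * (pi x * g x) + m ^ 2 * pi x :=
      fun x => by ring
    simp_rw [this, Finset.sum_add_distrib, Finset.sum_sub_distrib, ← Finset.mul_sum, hR.2.1,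
      ← hm, ← hN]
    ring
  have h3 : ∑ x, pi x * ((g x - m) * ∑ y, P x y * (g y - m)) =
      ∑ x, pi x * (g x * ∑ y, P x y * g y) - m ^ 2 := by
    have h4 : ∑ x, pi x * ∑ y, P x y * g y = m := by
      rw [hm, ← pi_marg hP hR g]
      simp_rw [Finset.mul_sum, mul_assoc]
    have : ∀ x, pi x * ((g x - m) * ∑ y, P x y * (g y - m)) =
        pi x * (g x * ∑ y, P x y * g y) - m * (pi x * g x) -
          m * (pi x * ∑ y, P x y * g y) + m ^ 2 * pi x := fun x => by
      simp_rw [mul_sub, Finset.sum_sub_distrib, ← Finset.sum_mul, hP.2 x]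
      ring
    simp_rw [this, Finset.sum_add_distrib, Finset.sum_sub_distrib, ← Finset.mul_sum, hR.2.1,
      h4, ← hm]
    ring
  have h5 := form_lam hP hR (fun x => g x - m) h1
  rw [h2, h3] at h5
  have h6 : m ^ 2 ≤ (1 - piOf pi S) * N := by
    have hcs := Finset.sum_mul_sq_le_sq_mul_sq Finset.univ
      (fun x => Sᶜ.indicator (fun x => √(pi x)) x) (fun x => √(pi x) * g x)
    have e1 : ∑ x, Sᶜ.indicator (fun x => √(pi x)) x * (√(pi x) * g x) = m := by
      refine Finset.sum_congr rfl fun x _ => ?_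
      by_cases hx : x ∈ S
      · simp [hg x hx]
      · simp [hx, ← mul_assoc, Real.mul_self_sqrt (hR.1 x).le]
    have e2 : ∑ x, (Sᶜ.indicator (fun x => √(pi x)) x) ^ 2 = 1 - piOf pi S := by
      rw [← hR.2.1, piOf, ← Finset.sum_sub_distrib]
      refine Finset.sum_congr rfl fun x _ => ?_
      by_cases hx : x ∈ S
      · simp [hx]
      · simp [hx, Real.sq_sqrt (hR.1 x).le]
    have e3 : ∑ x, (√(pi x) * g x) ^ 2 = N := by
      refine Finset.sum_congr rfl fun x _ => ?_
      rw [mul_pow, Real.sq_sqrt (hR.1 x).le]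
    rw [e1, e2, e3] at hcs
    exact hcs
  nlinarith

lemma surv_pow {P : Matrix G G ℝ} {pi : G → ℝ} (hP : IsStochastic P) (hI : IsIrreducible P)
    (hA : IsAperiodic P) (hR : IsReversible P pi) (S : Set G)
    (hr : 0 ≤ 1 - piOf pi S * (1 - lam P pi)) (k : ℕ) :
    ∑ x, pi x * surv P S (2 * k) x ≤ (1 - piOf pi S * (1 - lam P pi)) ^ k := by
  induction k with
  | zero =>
    rw [pow_zero, ← hR.2.1]
    refine Finset.sum_le_sum fun x _ => ?_
    by_cases hx : x ∈ S
    · simp [surv, hx, (hR.1 x).le]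
    · simp [surv, hx]
  | succ n ih =>
    have h1 := surv_le hP hR S (2 * n + 1)
    have h2 : ∑ x, pi x * surv P S (2 * n + 1) x ≤
        (1 - piOf pi S * (1 - lam P pi)) * ∑ x, pi x * surv P S (2 * n) x := by
      have e1 := surv_add hR S n (n + 1)
      have e2 := surv_add hR S n n
      have e3 := form_off hP hI hA hR S (surv P S n) (surv_mem P S n)
      simp_rw [surv_mul] at e1
      simp_rw [← pow_two] at e2
      rw [e1, e2] at e3
      rw [two_mul]
      exact e3
    calc _ ≤ _ := h1
      _ ≤ _ := h2
      _ ≤ _ := mul_le_mul_of_nonneg_left ih hr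
      _ = _ := by ring

end Helpers

section Meas
variable {G : Type*} [Fintype G] [DecidableEq G] [MeasurableSpace G] [MeasurableSingletonClass G]

/-- extension of a finite word -/
def ext' (t : ℕ) (w : Fin (t + 1) → G) : ℕ → G := fun i => w ⟨min i t, by omega⟩

lemma meas_ev (n : ℕ) (B : Set G) : MeasurableSet {ω : ℕ → G | ω n ∈ B} :=
  measurable_pi_apply n (B.toFinite.measurableSet)

lemma restr_eq (t : ℕ) (w : Fin (t + 1) → G) :
    (fun (ω : ℕ → G) (i : Fin (t + 1)) => ω i) ⁻¹' {w} = {ω | ∀ i ≤ t, ω i = ext' t w i} := by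
  ext ω
  simp only [Set.mem_preimage, Set.mem_singleton_iff, Set.mem_ofPred_eq, ext']
  constructor
  · rintro rfl i hi
    simp [min_eq_left hi]
  · intro h
    ext ⟨i, hi⟩
    have := h i (by omega)
    simpa [min_eq_left (show i ≤ t by omega)] using this

lemma part (ν : Measure (ℕ → G)) [IsFiniteMeasure ν] (t : ℕ) (F : Set (ℕ → G)) :
    ν.real F = ∑ w : Fin (t + 1) → G, ν.real (F ∩ {ω | ∀ i ≤ t, ω i = ext' t w i}) := by
  have hm : Measurable (fun (ω : ℕ → G) (i : Fin (t + 1)) => ω i) :=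
    measurable_pi_lambda _ fun i => measurable_pi_apply _
  have h := sum_measureReal_preimage_singleton (μ := ν.restrict F) (Finset.univ)
    (f := fun (ω : ℕ → G) (i : Fin (t + 1)) => ω i)
    (fun y _ => hm (measurableSet_singleton y))
  simp only [Finset.coe_univ, Set.preimage_univ] at h
  rw [measureReal_restrict_apply MeasurableSet.univ, Set.univ_inter] at h
  rw [← h]
  refine Finset.sum_congr rfl fun w _ => ?_
  rw [measureReal_restrict_apply (hm (measurableSet_singleton w)), restr_eq, Set.inter_comm]

lemma markov {P : Matrix G G ℝ} (hP : IsStochastic P) {μ : G → Measure (ℕ → G)}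
    (hM : IsMarkovChain P μ) (y : G) (t : ℕ) (z x : G) (E : Set (ℕ → G))
    (hE : ∀ ω ω' : ℕ → G, (∀ i ≤ t, ω i = ω' i) → ω ∈ E → ω' ∈ E) :
    (μ y).real (E ∩ {ω | ω t = z} ∩ {ω | ω (t + 1) = x}) =
      (μ y).real (E ∩ {ω | ω t = z}) * P z x := by
  have := hM.1 y
  rw [part (μ y) t (E ∩ {ω | ω t = z} ∩ {ω | ω (t + 1) = x}), part (μ y) t (E ∩ {ω | ω t = z}),
    Finset.sum_mul]
  refine Finset.sum_congr rfl fun w _ => ?_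
  set v := ext' t w with hv
  by_cases hw : v ∈ E ∧ v t = z
  · have e1 : E ∩ {ω | ω t = z} ∩ {ω | ∀ i ≤ t, ω i = v i} = {ω | ∀ i ≤ t, ω i = v i} := by
      refine Set.inter_eq_right.2 fun ω hω => ⟨hE v ω (fun i hi => (hω i hi).symm) hw.1, ?_⟩
      exact (hω t le_rfl).trans hw.2
    set v' : ℕ → G := fun i => if i ≤ t then v i else x with hv'
    have e2 : E ∩ {ω | ω t = z} ∩ {ω | ω (t + 1) = x} ∩ {ω | ∀ i ≤ t, ω i = v i} =
        {ω | ∀ i ≤ t + 1, ω i = v' i} := by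
      rw [Set.inter_right_comm, e1]
      ext ω
      simp only [Set.mem_inter_iff, Set.mem_ofPred_eq, hv']
      constructor
      · rintro ⟨h1, h2⟩ i hi
        split_ifs with h
        · exact h1 i h
        · rw [show i = t + 1 by omega]; exact h2
      · intro h
        refine ⟨fun i hi => ?_, ?_⟩
        · have := h i (by omega)
          rwa [if_pos hi] at this
        · have := h (t + 1) le_rfl
          rwa [if_neg (by omega)] at this
    rw [e1, e2, measureReal_def, measureReal_def, hM.2, hM.2]
    have hnn : ∀ (w : ℕ → G) (n : ℕ),
        0 ≤ (if w 0 = y then (1:ℝ) else 0) * ∏ i ∈ Finset.range n, P (w i) (w (i + 1)) :=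
      fun w n => mul_nonneg (by split_ifs <;> norm_num)
        (Finset.prod_nonneg fun i _ => hP.1 _ _)
    rw [ENNReal.toReal_ofReal (hnn _ _), ENNReal.toReal_ofReal (hnn _ _),
      Finset.prod_range_succ]
    have f0 : v' 0 = v 0 := by simp [hv']
    have f1 : v' t = z := by simp [hv', hw.2]
    have f2 : v' (t + 1) = x := by simp [hv']
    have f3 : ∏ i ∈ Finset.range t, P (v' i) (v' (i + 1)) =
        ∏ i ∈ Finset.range t, P (v i) (v (i + 1)) := by
      refine Finset.prod_congr rfl fun i hi => ?_
      have := Finset.mem_range.1 hi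
      simp only [hv']
      rw [if_pos (by omega), if_pos (by omega)]
    rw [f0, f1, f2, f3]; ring
  · have e1 : E ∩ {ω | ω t = z} ∩ {ω | ∀ i ≤ t, ω i = v i} = ∅ := by
      rw [Set.eq_empty_iff_forall_notMem]
      rintro ω ⟨⟨h1, h2⟩, h3⟩
      exact hw ⟨hE ω v h3 h1, (h3 t le_rfl).symm.trans h2⟩
    rw [Set.inter_right_comm, e1]
    simp

/-- path law from stationarity -/
noncomputable def statLaw (pi : G → ℝ) (μ : G → Measure (ℕ → G)) (E : Set (ℕ → G)) : ℝ :=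
  ∑ y, pi y * (μ y).real E

variable {P : Matrix G G ℝ} {pi : G → ℝ} {μ : G → Measure (ℕ → G)}

lemma stat_markov (hP : IsStochastic P) (hM : IsMarkovChain P μ) (t : ℕ) (z x : G)
    (E : Set (ℕ → G))
    (hE : ∀ ω ω' : ℕ → G, (∀ i ≤ t, ω i = ω' i) → ω ∈ E → ω' ∈ E) :
    statLaw pi μ (E ∩ {ω | ω t = z} ∩ {ω | ω (t + 1) = x}) =
      statLaw pi μ (E ∩ {ω | ω t = z}) * P z x := by
  unfold statLaw
  rw [Finset.sum_mul]
  refine Finset.sum_congr rfl fun y _ => ?_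
  rw [markov hP hM y t z x E hE]; ring

lemma stat_fiber (hM : IsMarkovChain P μ) (t : ℕ) (F : Set (ℕ → G)) :
    statLaw pi μ F = ∑ z, statLaw pi μ (F ∩ {ω | ω t = z}) := by
  unfold statLaw
  rw [Finset.sum_comm]
  refine Finset.sum_congr rfl fun y _ => ?_
  have := hM.1 y
  rw [← Finset.mul_sum]
  congr 1
  have h := sum_measureReal_preimage_singleton (μ := (μ y).restrict F) (Finset.univ)
    (f := fun (ω : ℕ → G) => ω t)
    (fun z _ => measurable_pi_apply t (measurableSet_singleton z))
  simp only [Finset.coe_univ, Set.preimage_univ] at h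
  rw [measureReal_restrict_apply MeasurableSet.univ, Set.univ_inter] at h
  rw [← h]
  refine Finset.sum_congr rfl fun z _ => ?_
  rw [measureReal_restrict_apply (measurable_pi_apply t (measurableSet_singleton z)),
    Set.inter_comm]
  rfl

lemma stat_zero (hM : IsMarkovChain P μ) (x : G) : statLaw pi μ {ω | ω 0 = x} = pi x := by
  unfold statLaw
  have : ∀ y, (μ y).real {ω | ω 0 = x} = if x = y then 1 else 0 := by
    intro y
    have := hM.2 y 0 (fun _ => x)
    simp only [Nat.le_zero, forall_eq, Finset.range_zero, Finset.prod_empty, mul_one] at this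
    rw [measureReal_def, this]
    split_ifs <;> simp
  simp [this]

lemma stat_time (hP : IsStochastic P) (hR : IsReversible P pi) (hM : IsMarkovChain P μ) (t : ℕ)
    (x : G) : statLaw pi μ {ω | ω t = x} = pi x := by
  induction t generalizing x with
  | zero => exact stat_zero hM x
  | succ n ih =>
    rw [stat_fiber hM n]
    have : ∀ z, statLaw pi μ ({ω | ω (n + 1) = x} ∩ {ω | ω n = z}) = pi x * P x z := by
      intro z
      have := stat_markov (pi := pi) hP hM n z x Set.univ (fun _ _ _ _ => trivial)
      rw [Set.univ_inter, ih, hR.2.2] at this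
      rw [Set.inter_comm, this]
    simp_rw [this, ← Finset.mul_sum, hP.2, mul_one]

lemma stat_surv (hP : IsStochastic P) (hR : IsReversible P pi) (hM : IsMarkovChain P μ)
    (S : Set G) (t : ℕ) (x : G) :
    statLaw pi μ ({ω | ∀ i ≤ t, ω i ∉ S} ∩ {ω | ω t = x}) = pi x * surv P S t x := by
  have hemp : statLaw pi μ ∅ = 0 := by simp [statLaw]
  have hin : ∀ t, x ∈ S → ({ω : ℕ → G | ∀ i ≤ t, ω i ∉ S} ∩ {ω | ω t = x}) = ∅ := by
    intro t hx
    rw [Set.eq_empty_iff_forall_notMem]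
    rintro ω ⟨h1, rfl⟩
    exact h1 t le_rfl hx
  induction t generalizing x with
  | zero =>
    by_cases hx : x ∈ S
    · rw [hin 0 hx, hemp, surv_mem _ _ _ _ hx, mul_zero]
    · have : ({ω : ℕ → G | ∀ i ≤ 0, ω i ∉ S} ∩ {ω | ω 0 = x}) = {ω | ω 0 = x} := by
        refine Set.inter_eq_right.2 ?_
        rintro ω rfl i hi
        rwa [Nat.le_zero.1 hi]
      rw [this, stat_zero hM]
      simp [surv, hx]
  | succ n ih =>
    by_cases hx : x ∈ S
    · rw [hin _ hx, hemp, surv_mem _ _ _ _ hx, mul_zero]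
    · rw [stat_fiber hM n]
      have e : ∀ z, statLaw pi μ ({ω | ∀ i ≤ n + 1, ω i ∉ S} ∩ {ω | ω (n + 1) = x} ∩
          {ω | ω n = z}) = pi x * (P x z * surv P S n z) := by
        intro z
        have e1 : ({ω : ℕ → G | ∀ i ≤ n + 1, ω i ∉ S} ∩ {ω | ω (n + 1) = x} ∩ {ω | ω n = z}) =
            {ω | ∀ i ≤ n, ω i ∉ S} ∩ {ω | ω n = z} ∩ {ω | ω (n + 1) = x} := by
          ext ω
          simp only [Set.mem_inter_iff, Set.mem_ofPred_eq]
          constructor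
          · rintro ⟨⟨h1, h2⟩, h3⟩
            exact ⟨⟨fun i hi => h1 i (by omega), h3⟩, h2⟩
          · rintro ⟨⟨h1, h2⟩, h3⟩
            refine ⟨⟨fun i hi => ?_, h3⟩, h2⟩
            rcases Nat.lt_or_ge n i with h | h
            · rw [show i = n + 1 by omega, h3]; exact hx
            · exact h1 i h
        rw [e1, stat_markov hP hM n z x {ω | ∀ i ≤ n, ω i ∉ S}
          (fun ω ω' h hω i hi => h i hi ▸ hω i hi)]
        rw [ih z (by
          intro t hz
          rw [Set.eq_empty_iff_forall_notMem]
          rintro ω ⟨h1, rfl⟩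
          exact h1 t le_rfl hz)]
        linear_combination surv P S n z * hR.2.2 z x
      simp_rw [e, ← Finset.mul_sum]
      simp [surv, hx]

lemma hit_eq (S : Set G) (ω : ℕ → G) (n : ℕ) (h : hit S ω = (n : ℕ∞)) :
    ω n ∈ S ∧ ∀ i < n, ω i ∉ S := by
  unfold hit at h
  have hne : ((↑) '' {n : ℕ | ω n ∈ S} : Set ℕ∞).Nonempty := by
    by_contra hc
    rw [Set.not_nonempty_iff_eq_empty] at hc
    rw [hc, sInf_empty] at h
    exact absurd h.symm (ENat.natCast_ne_top n)
  have hmem := csInf_mem hne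
  rw [h] at hmem
  obtain ⟨m, hm, hmn⟩ := hmem
  have : m = n := by exact_mod_cast hmn
  subst this
  refine ⟨hm, fun i hi his => ?_⟩
  have : sInf ((↑) '' {n : ℕ | ω n ∈ S} : Set ℕ∞) ≤ (i : ℕ∞) := sInf_le ⟨i, his, rfl⟩
  rw [h] at this
  have : m ≤ i := by exact_mod_cast this
  omega

lemma hit_of (S : Set G) (ω : ℕ → G) (n : ℕ) (h : ω n ∈ S ∧ ∀ i < n, ω i ∉ S) :
    hit S ω = (n : ℕ∞) := by
  apply le_antisymm
  · exact sInf_le ⟨n, h.1, rfl⟩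
  · apply le_sInf
    rintro _ ⟨m, hm, rfl⟩
    by_contra hc
    have : m < n := by exact_mod_cast not_le.1 hc
    exact h.2 m this hm

lemma hitsAt_meas (S : Set G) (x : G) : MeasurableSet (hitsAt S x) := by
  have : hitsAt S x = ⋃ n : ℕ, (({ω | ω n ∈ S} ∩ ⋂ i : ℕ, ⋂ _ : i < n, {ω | ω i ∈ Sᶜ}) ∩
      {ω | ω n ∈ ({x} : Set G)}) := by
    ext ω
    simp only [hitsAt, Set.mem_ofPred_eq, Set.mem_iUnion, Set.mem_inter_iff, Set.mem_iInter,
      Set.mem_compl_iff, Set.mem_singleton_iff]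
    refine exists_congr fun n => and_congr_left fun _ => ⟨hit_eq S ω n, hit_of S ω n⟩
  rw [this]
  exact MeasurableSet.iUnion fun n => ((meas_ev n S).inter
    (MeasurableSet.iInter fun i => MeasurableSet.iInter fun _ => meas_ev i _)).inter (meas_ev n _)

lemma harm_bound (hP : IsStochastic P) (hR : IsReversible P pi) (hM : IsMarkovChain P μ)
    (A S : Set G) (t : ℕ) :
    ∑ x, A.indicator (harmStat pi μ S) x ≤ (t + 1) * piOf pi A + ∑ x, pi x * surv P S t x := by
  classical
  have h1 : ∀ y, ∑ x, A.indicator (fun x => harm μ S y x) x ≤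
      ∑ n ∈ Finset.range (t + 1), ∑ x, A.indicator (fun x => (μ y).real {ω | ω n = x}) x +
        (μ y).real {ω | ∀ i ≤ t, ω i ∉ S} := by
    intro y
    have := hM.1 y
    have hind : ∀ f : G → ℝ, ∑ x, A.indicator f x = ∑ x ∈ Finset.univ.filter (· ∈ A), f x := by
      intro f
      rw [Finset.sum_filter]
      exact Finset.sum_congr rfl fun x _ => by simp [Set.indicator_apply]
    simp_rw [hind]
    have e : ∑ x ∈ Finset.univ.filter (· ∈ A), harm μ S y x =
        (μ y).real (⋃ x ∈ Finset.univ.filter (· ∈ A), hitsAt S x) := by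
      rw [measureReal_biUnion_finset]
      · rfl
      · intro a _ b _ hab
        refine Set.disjoint_left.2 ?_
        rintro ω ⟨n, hn, rfl⟩ ⟨m, hm, rfl⟩
        rw [hn] at hm
        have : n = m := by exact_mod_cast hm
        exact hab (by rw [this])
      · exact fun x _ => hitsAt_meas S x
    rw [e]
    have hsub : (⋃ x ∈ Finset.univ.filter (· ∈ A), hitsAt S x) ⊆
        (⋃ n ∈ Finset.range (t + 1), ⋃ x ∈ Finset.univ.filter (· ∈ A), {ω : ℕ → G | ω n = x}) ∪
          {ω | ∀ i ≤ t, ω i ∉ S} := by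
      intro ω hω
      simp only [Set.mem_iUnion, Finset.mem_filter, Finset.mem_univ, true_and] at hω
      obtain ⟨x, hx, n, hn, hnx⟩ := hω
      rcases Nat.lt_or_ge t n with h | h
      · right
        intro i hi
        exact (hit_eq S ω n hn).2 i (by omega)
      · left
        simp only [Set.mem_iUnion, Finset.mem_filter, Finset.mem_univ, true_and,
          Finset.mem_range]
        exact ⟨n, by omega, x, hx, hnx⟩
    refine (measureReal_mono hsub).trans ((measureReal_union_le _ _).trans ?_)
    gcongr
    refine (measureReal_biUnion_finset_le _ _).trans (Finset.sum_le_sum fun n _ => ?_)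
    exact measureReal_biUnion_finset_le _ _
  have h2 : ∑ x, A.indicator (harmStat pi μ S) x =
      ∑ y, pi y * ∑ x, A.indicator (fun x => harm μ S y x) x := by
    simp_rw [Finset.mul_sum]
    rw [Finset.sum_comm]
    refine Finset.sum_congr rfl fun x _ => ?_
    by_cases hx : x ∈ A
    · simp [hx, harmStat]
    · simp [hx]
  rw [h2]
  refine (Finset.sum_le_sum fun y _ => mul_le_mul_of_nonneg_left (h1 y) (hR.1 y).le).trans ?_
  simp_rw [mul_add, Finset.sum_add_distrib]
  apply le_of_eq
  congr 1
  · simp_rw [Finset.mul_sum]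
    rw [Finset.sum_comm]
    have : ∀ n ∈ Finset.range (t + 1), ∑ y, ∑ x,
        pi y * A.indicator (fun x => (μ y).real {ω | ω n = x}) x = piOf pi A := by
      intro n _
      rw [Finset.sum_comm]
      refine Finset.sum_congr rfl fun x _ => ?_
      by_cases hx : x ∈ A
      · simp only [hx, Set.indicator_of_mem]
        exact stat_time hP hR hM n x
      · simp [hx]
    rw [Finset.sum_congr rfl this]
    simp
  · have := stat_fiber (pi := pi) hM t {ω | ∀ i ≤ t, ω i ∉ S}
    simp_rw [stat_surv hP hR hM] at this
    exact this

end Meas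

/-- There are universal constants `C > 0` and `ε₀ > 0` such that for every finite
reversible, irreducible, aperiodic chain, every `0 < ε ≤ ε₀` and all
`A ⊆ S ⊆ G` with `S` nonempty and `π(A) ≤ ε·π(S)`,
`h_S(A) ≤ C·ε·log(1/ε)/(1−λ)`. -/
theorem stmt11 :
    ∃ C : ℝ, 0 < C ∧ ∃ ε₀ : ℝ, 0 < ε₀ ∧
      ∀ (G : Type) [Fintype G] [DecidableEq G] [MeasurableSpace G]
        [MeasurableSingletonClass G]
        (P : Matrix G G ℝ) (pi : G → ℝ) (μ : G → Measure (ℕ → G)),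
        IsStochastic P → IsIrreducible P → IsAperiodic P →
        IsReversible P pi → IsMarkovChain P μ →
        ∀ ε : ℝ, 0 < ε → ε ≤ ε₀ →
        ∀ (A S : Set G), A ⊆ S → S.Nonempty → piOf pi A ≤ ε * piOf pi S →
          ∑ x, A.indicator (harmStat pi μ S) x ≤
            C * ε * Real.log (1 / ε) / (1 - lam P pi) := by
  refine ⟨6, by norm_num, Real.exp (-1), Real.exp_pos _, ?_⟩
  intro G _ _ _ _ P pi μ hP hI hA hR hM ε hε hε0 A S hAS hS hpi
  have hl0 := lam_nonneg P pi
  have hl1 := lam_lt_one hP hI hA hR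
  set l := lam P pi with hl
  set s := piOf pi S with hs
  have hnn : ∀ x, 0 ≤ S.indicator pi x := fun x =>
    Set.indicator_nonneg (fun x _ => (hR.1 x).le) x
  have hs0 : 0 < s := by
    obtain ⟨x, hx⟩ := hS
    have h1 : S.indicator pi x ≤ s :=
      Finset.single_le_sum (f := S.indicator pi) (fun y _ => hnn y) (Finset.mem_univ x)
    rw [Set.indicator_of_mem hx] at h1
    exact (hR.1 x).trans_le h1
  have hs1 : s ≤ 1 := by
    rw [← hR.2.1]
    exact Finset.sum_le_sum fun x _ => Set.indicator_le_self' (fun x _ => (hR.1 x).le) x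
  set L := Real.log (1 / ε) with hL
  have hLe : L = - Real.log ε := by rw [hL, one_div, Real.log_inv]
  have hL1 : 1 ≤ L := by
    have := Real.log_le_log hε hε0
    rw [Real.log_exp] at this
    linarith
  have hd : 0 < 1 - l := by linarith
  set k := ⌈L / ((1 - l) * s)⌉₊ with hk
  have hk1 : L / ((1 - l) * s) ≤ k := Nat.le_ceil _
  have hk2 : (k : ℝ) < L / ((1 - l) * s) + 1 := Nat.ceil_lt_add_one (by positivity)
  have hr : 0 ≤ 1 - s * (1 - l) := by nlinarith
  have hb := harm_bound hP hR hM A S (2 * k)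
  have hp := surv_pow hP hI hA hR S hr k
  have he : (1 - s * (1 - l)) ^ k ≤ ε := by
    have h1 : 1 - s * (1 - l) ≤ Real.exp (-(s * (1 - l))) := by
      have := Real.add_one_le_exp (-(s * (1 - l))); linarith
    calc (1 - s * (1 - l)) ^ k ≤ Real.exp (-(s * (1 - l))) ^ k := pow_le_pow_left₀ hr h1 k
      _ = Real.exp (k * -(s * (1 - l))) := (Real.exp_nat_mul _ _).symm
      _ ≤ Real.exp (Real.log ε) := by
        apply Real.exp_le_exp.2
        rw [div_le_iff₀ (by positivity)] at hk1
        linarith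
      _ = ε := Real.exp_log hε
  have hq : (k : ℝ) * s ≤ L / (1 - l) + 1 := by
    have h1 : L / ((1 - l) * s) * s = L / (1 - l) := by field_simp
    nlinarith
  have hLd : 1 ≤ L / (1 - l) := by
    rw [le_div_iff₀ hd]; linarith
  have hfin : ∑ x, A.indicator (harmStat pi μ S) x ≤ ε * (6 * (L / (1 - l))) := by
    have h1 : ((2 * k : ℕ) + 1 : ℝ) * piOf pi A ≤ (2 * k + 1) * (ε * s) := by
      push_cast
      exact mul_le_mul_of_nonneg_left hpi (by positivity)
    have h2 : (2 * k + 1) * (ε * s) ≤ ε * (2 * (L / (1 - l)) + 3) := by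
      have : (2 * k + 1) * (ε * s) = ε * (2 * (k * s) + s) := by ring
      rw [this]
      exact mul_le_mul_of_nonneg_left (by linarith) hε.le
    have h3 : ε * (2 * (L / (1 - l)) + 3) + ε ≤ ε * (6 * (L / (1 - l))) := by nlinarith
    linarith
  calc _ ≤ _ := hfin
    _ = _ := by ring

end HM
end

section
/- There exists a constant C > 0 (depending only on the dimension d ≥ 3) such that for all sufficiently small ε > 0 and all sufficiently large n the following holds: for the lazy simple random walk on the torus G = (ℤ/nℤ)^d, if A ⊆ S ⊆ G are sets with S nonempty and |A| ≤ (ε/(n² log n))·|S|, then the harmonic measure from the uniform distribution satisfies h_S(A) ≤ C·ε. -/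
open MeasureTheory Finset
open scoped ENNReal

namespace HM

variable {G : Type*} [Fintype G] [DecidableEq G]

variable [MeasurableSpace G]

/-- Adjacency on the discrete torus `(ℤ/nℤ)^d`: two points are adjacent iff they
differ by `±1` in exactly one coordinate. -/
def torusAdj {d n : ℕ} (x y : Fin d → ZMod n) : Prop :=
  x ≠ y ∧ ∃ i : Fin d, (∀ j : Fin d, j ≠ i → x j = y j) ∧
    (y i = x i + 1 ∨ y i = x i - 1)

open Classical in
/-- The transition matrix of the lazy simple random walk on the torus `(ℤ/nℤ)^d`:
`P(x,x) = 1/2` and `P(x,y) = 1/(4d)` for `y` adjacent to `x`. -/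
noncomputable def lazyTorus (d n : ℕ) [NeZero n] :
    Matrix (Fin d → ZMod n) (Fin d → ZMod n) ℝ :=
  Matrix.of fun x y => if y = x then 1 / 2 else if torusAdj x y then 1 / (4 * d) else 0



section Helpers

variable {d n : ℕ} [NeZero n]

/-- Unit vector. -/
def ev (i : Fin d) : Fin d → ZMod n := Pi.single i 1

lemma zmod_one_ne (hn : 3 ≤ n) : (1 : ZMod n) ≠ 0 ∧ (1 : ZMod n) ≠ -1 := by
  have h1 : ((1 : ℕ) : ZMod n) ≠ 0 := by
    intro h
    rw [ZMod.natCast_eq_zero_iff] at h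
    have := Nat.le_of_dvd (by norm_num) h
    omega
  have h2 : ((2 : ℕ) : ZMod n) ≠ 0 := by
    intro h
    rw [ZMod.natCast_eq_zero_iff] at h
    have := Nat.le_of_dvd (by norm_num) h
    omega
  refine ⟨by simpa using h1, fun h => h2 ?_⟩
  push_cast
  linear_combination h

lemma lazyTorus_apply (hn : 3 ≤ n) (x y : Fin d → ZMod n) :
    lazyTorus d n x y = 1 / 2 * (if y = x then 1 else 0) +
      1 / (4 * d) * ∑ i : Fin d, ((if y = x + ev i then 1 else 0) +
        (if y = x - ev i then 1 else 0)) := by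
  classical
  obtain ⟨h10, h11⟩ := zmod_one_ne hn
  have key : ∀ i, y = x + ev i → torusAdj x y := by
    rintro i rfl
    refine ⟨fun h => h10 ?_, i, ?_, ?_⟩
    · have := congrFun h i
      simpa [ev] using this
    · intro j hj
      simp [ev, hj]
    · left; simp [ev]
  have key' : ∀ i, y = x - ev i → torusAdj x y := by
    rintro i rfl
    refine ⟨fun h => h10 ?_, i, ?_, ?_⟩
    · have := congrFun h i
      simp only [ev, Pi.sub_apply, Pi.single_eq_same] at this
      linear_combination this
    · intro j hj
      simp [ev, hj]
    · right; simp [ev]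
  simp only [lazyTorus, Matrix.of_apply]
  by_cases hxy : y = x
  · have : ∀ i : Fin d, (y ≠ x + ev i) ∧ (y ≠ x - ev i) := fun i =>
      ⟨fun h => (key i h).1 hxy.symm, fun h => (key' i h).1 hxy.symm⟩
    simp only [if_pos hxy, if_neg (this _).1, if_neg (this _).2]
    simp
  · rw [if_neg hxy, if_neg hxy]
    by_cases hadj : torusAdj x y
    · rw [if_pos hadj]
      obtain ⟨-, i, hi, h⟩ := hadj
      rw [Finset.sum_eq_single i]
      · rcases h with h | h
        · have e1 : y = x + ev i := by
            ext j
            by_cases hj : j = i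
            · subst hj; simp [ev, h]
            · simp [ev, hj, hi j hj]
          have e2 : y ≠ x - ev i := by
            intro e
            rw [e] at h
            simp only [ev, Pi.sub_apply, Pi.single_eq_same] at h
            exact h11 (by linear_combination -h)
          rw [if_pos e1, if_neg e2]; ring
        · have e1 : y = x - ev i := by
            ext j
            by_cases hj : j = i
            · subst hj; simp [ev, h]
            · simp [ev, hj, hi j hj]
          have e2 : y ≠ x + ev i := by
            intro e
            rw [e] at h
            simp only [ev, Pi.add_apply, Pi.single_eq_same] at h
            exact h11 (by linear_combination h)
          rw [if_pos e1, if_neg e2]; ring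
      · intro j _ hj
        have e1 : y ≠ x + ev j := by
          intro e
          have := hi j hj
          rw [e] at this
          simp [ev] at this
          exact h10 this
        have e2 : y ≠ x - ev j := by
          intro e
          have := hi j hj
          rw [e] at this
          simp only [ev, Pi.sub_apply, Pi.single_eq_same] at this
          exact h10 (by linear_combination this)
        rw [if_neg e1, if_neg e2]; ring
      · simp
    · have : ∀ i : Fin d, (y ≠ x + ev i) ∧ (y ≠ x - ev i) := fun i =>
        ⟨fun h => hadj (key i h), fun h => hadj (key' i h)⟩
      simp only [if_neg hadj, if_neg (this _).1, if_neg (this _).2]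
      simp

lemma lazy_mulVec (hn : 3 ≤ n) (f : (Fin d → ZMod n) → ℝ) (x : Fin d → ZMod n) :
    (lazyTorus d n).mulVec f x = 1 / 2 * f x +
      1 / (4 * d) * ∑ i : Fin d, (f (x + ev i) + f (x - ev i)) := by
  have e : ∀ y, lazyTorus d n x y * f y = 1 / 2 * (if y = x then f y else 0) +
      1 / (4 * d) * ∑ i : Fin d, ((if y = x + ev i then f y else 0) +
        (if y = x - ev i then f y else 0)) := by
    intro y
    rw [lazyTorus_apply hn, add_mul, mul_assoc, mul_assoc, Finset.sum_mul]
    simp only [add_mul, ite_mul, one_mul, zero_mul]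
  simp only [Matrix.mulVec, dotProduct, e]
  rw [Finset.sum_add_distrib, ← Finset.mul_sum, ← Finset.mul_sum, Finset.sum_comm]
  congr 1
  · simp
  · congr 1
    refine Finset.sum_congr rfl fun i _ => ?_
    rw [Finset.sum_add_distrib]
    simp

lemma lazy_nonneg (x y : Fin d → ZMod n) : 0 ≤ lazyTorus d n x y := by
  simp only [lazyTorus, Matrix.of_apply]
  split_ifs <;> positivity

lemma lazy_symm (hn : 3 ≤ n) (x y : Fin d → ZMod n) :
    lazyTorus d n x y = lazyTorus d n y x := by
  rw [lazyTorus_apply hn, lazyTorus_apply hn]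
  congr 2
  · simp [eq_comm]
  · refine Finset.sum_congr rfl fun i _ => ?_
    rw [add_comm]
    congr 2
    · exact propext ⟨fun h => by rw [h]; simp, fun h => by rw [h]; simp⟩
    · exact propext ⟨fun h => by rw [h]; simp, fun h => by rw [h]; simp⟩

lemma lazy_one (hd : 3 ≤ d) (hn : 3 ≤ n) :
    (lazyTorus d n).mulVec (fun _ => 1) = fun _ => 1 := by
  ext x
  rw [lazy_mulVec hn]
  have : (d : ℝ) ≠ 0 := by positivity
  simp
  field_simp
  norm_num

/-- Dirichlet translate energy. -/
noncomputable def rho (f : (Fin d → ZMod n) → ℝ) (z : Fin d → ZMod n) : ℝ :=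
  ‖WithLp.toLp 2 (fun x => f (x + z) - f x)‖

lemma rho_sq (f : (Fin d → ZMod n) → ℝ) (z : Fin d → ZMod n) :
    rho f z ^ 2 = ∑ x, (f (x + z) - f x) ^ 2 := by
  rw [rho, EuclideanSpace.norm_sq_eq]
  simp

lemma rho_nonneg (f : (Fin d → ZMod n) → ℝ) (z : Fin d → ZMod n) : 0 ≤ rho f z := norm_nonneg _

lemma rho_add (f : (Fin d → ZMod n) → ℝ) (z w : Fin d → ZMod n) :
    rho f (z + w) ≤ rho f z + rho f w := by
  have h1 : rho f w = ‖WithLp.toLp 2 (fun x => f (x + z + w) - f (x + z))‖ := by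
    rw [← sq_eq_sq₀ (rho_nonneg _ _) (norm_nonneg _), rho_sq, EuclideanSpace.norm_sq_eq]
    simp only [Real.norm_eq_abs, sq_abs]
    exact (Equiv.sum_comp (Equiv.addRight z) (fun x => (f (x + w) - f x) ^ 2)).symm
  rw [add_comm (rho f z), h1, rho, rho]
  refine le_trans (le_of_eq ?_) (norm_add_le _ _)
  congr 1
  ext x
  simp [add_assoc]

lemma rho_zero (f : (Fin d → ZMod n) → ℝ) : rho f 0 = 0 := by
  have := rho_sq f 0
  simpa using this

lemma rho_nsmul (f : (Fin d → ZMod n) → ℝ) (k : ℕ) (z : Fin d → ZMod n) :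
    rho f (k • z) ≤ k * rho f z := by
  induction k with
  | zero => simp [rho_zero]
  | succ k ih =>
    rw [succ_nsmul]
    refine (rho_add _ _ _).trans ?_
    push_cast
    linarith

lemma rho_sum (f : (Fin d → ZMod n) → ℝ) (s : Finset (Fin d))
    (g : Fin d → (Fin d → ZMod n)) :
    rho f (∑ i ∈ s, g i) ≤ ∑ i ∈ s, rho f (g i) := by
  classical
  induction s using Finset.induction_on with
  | empty => simp [rho_zero]
  | insert a s ha ih =>
    rw [Finset.sum_insert ha, Finset.sum_insert ha]
    exact (rho_add _ _ _).trans (by linarith)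

lemma rho_bound (f : (Fin d → ZMod n) → ℝ) (z : Fin d → ZMod n) :
    rho f z ^ 2 ≤ d * n ^ 2 * ∑ i, rho f (ev i) ^ 2 := by
  have hz : z = ∑ i, (z i).val • (ev i : Fin d → ZMod n) := by
    ext j
    rw [Finset.sum_apply, Finset.sum_eq_single j]
    · simp only [ev, Pi.smul_apply, Pi.single_eq_same, nsmul_eq_mul, mul_one]
      exact (ZMod.natCast_zmod_val _).symm
    · intro i _ hi
      simp [ev, Pi.single_apply, hi.symm]
    · simp
  have h1 : rho f z ≤ ∑ i, n * rho f (ev i) := by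
    conv_lhs => rw [hz]
    refine (rho_sum _ _ _).trans (Finset.sum_le_sum fun i _ => ?_)
    refine (rho_nsmul _ _ _).trans ?_
    refine mul_le_mul_of_nonneg_right ?_ (rho_nonneg _ _)
    exact_mod_cast (ZMod.val_lt (z i)).le
  calc rho f z ^ 2 ≤ (∑ i, n * rho f (ev i)) ^ 2 := by
        have := rho_nonneg f z
        gcongr
    _ ≤ (Finset.univ : Finset (Fin d)).card * ∑ i, (n * rho f (ev i)) ^ 2 :=
        sq_sum_le_card_mul_sum_sq
    _ = _ := by
        simp only [mul_pow, ← Finset.mul_sum, Finset.card_univ, Fintype.card_fin]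
        ring

lemma poincare (f : (Fin d → ZMod n) → ℝ) (hf : ∑ x, f x = 0) :
    2 * ∑ x, f x ^ 2 ≤ d * n ^ 2 * ∑ i, rho f (ev i) ^ 2 := by
  set N : ℝ := (Fintype.card (Fin d → ZMod n) : ℝ) with hN
  have hNpos : 0 < N := by
    rw [hN]; exact_mod_cast Fintype.card_pos
  have h1 : ∑ z, rho f z ^ 2 = N * (2 * ∑ x, f x ^ 2) := by
    simp only [rho_sq]
    rw [Finset.sum_comm]
    have : ∀ x, ∑ z, (f (x + z) - f x) ^ 2 = ∑ w, f w ^ 2 + N * f x ^ 2 := by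
      intro x
      rw [show ∑ z, (f (x + z) - f x) ^ 2 = ∑ w, (f w - f x) ^ 2 from
        Equiv.sum_comp (Equiv.addLeft x) (fun w => (f w - f x) ^ 2)]
      have : ∀ w, (f w - f x) ^ 2 = f w ^ 2 - 2 * f x * f w + f x ^ 2 := fun w => by ring
      simp only [this, Finset.sum_add_distrib, Finset.sum_sub_distrib, ← Finset.mul_sum, hf]
      simp [hN]
    simp only [this, Finset.sum_add_distrib, ← Finset.mul_sum]
    simp only [Finset.sum_const, Finset.card_univ, nsmul_eq_mul, ← hN]
    ring
  have h2 : ∑ z, rho f z ^ 2 ≤ N * (d * n ^ 2 * ∑ i, rho f (ev i) ^ 2) := by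
    refine (Finset.sum_le_sum fun z _ => rho_bound f z).trans ?_
    rw [Finset.sum_const, Finset.card_univ, nsmul_eq_mul]
  rw [h1] at h2
  exact le_of_mul_le_mul_left h2 hNpos

lemma contraction (hd : 3 ≤ d) (hn : 3 ≤ n) (f : (Fin d → ZMod n) → ℝ) (hf : ∑ x, f x = 0) :
    ∑ x, (lazyTorus d n).mulVec f x ^ 2 ≤ (1 - 1 / (2 * d ^ 2 * n ^ 2)) * ∑ x, f x ^ 2 := by
  have hd0 : (0 : ℝ) < d := by positivity
  have hn0 : (0 : ℝ) < n := by positivity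
  have h1 : ∀ x, (lazyTorus d n).mulVec f x ^ 2 ≤ 1 / (2 * d) * ∑ i : Fin d,
      (f x ^ 2 + f (x + ev i) ^ 2 / 2 + f (x - ev i) ^ 2 / 2
        - (f (x + ev i) - f x) ^ 2 / 4 - (f (x - ev i) - f x) ^ 2 / 4) := by
    intro x
    have e : (lazyTorus d n).mulVec f x =
        1 / d * ∑ i : Fin d, (f x / 2 + (f (x + ev i) + f (x - ev i)) / 4) := by
      rw [lazy_mulVec hn, Finset.sum_add_distrib (f := fun _ => f x / 2),
        ← Finset.sum_div (f := fun i => f (x + ev i) + f (x - ev i)), Finset.sum_const, Finset.card_univ, Fintype.card_fin, nsmul_eq_mul]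
      field_simp
    rw [e, mul_pow]
    have cs := sq_sum_le_card_mul_sum_sq (s := (Finset.univ : Finset (Fin d)))
      (f := fun i => (f x / 2 + (f (x + ev i) + f (x - ev i)) / 4))
    rw [Finset.card_univ, Fintype.card_fin] at cs
    calc _ ≤ (1 / (d : ℝ)) ^ 2 * (d * ∑ i : Fin d,
            (f x / 2 + (f (x + ev i) + f (x - ev i)) / 4) ^ 2) := by gcongr
      _ = 1 / (2 * d) * ∑ i : Fin d,
            2 * (f x / 2 + (f (x + ev i) + f (x - ev i)) / 4) ^ 2 := by
          rw [← Finset.mul_sum]; field_simp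
      _ ≤ _ := by
          gcongr with i
          nlinarith [sq_nonneg (f (x + ev i) - f (x - ev i))]
  have tr : ∀ (g : (Fin d → ZMod n) → ℝ) (z), ∑ x, g (x + z) = ∑ x, g x := fun g z =>
    Equiv.sum_comp (Equiv.addRight z) g
  have tr' : ∀ (g : (Fin d → ZMod n) → ℝ) (z), ∑ x, g (x - z) = ∑ x, g x := fun g z =>
    Equiv.sum_comp (Equiv.subRight z) g
  have h2 : ∑ x, (lazyTorus d n).mulVec f x ^ 2 ≤
      ∑ x, f x ^ 2 - 1 / (4 * d) * ∑ i, rho f (ev i) ^ 2 := by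
    refine (Finset.sum_le_sum fun x _ => h1 x).trans (le_of_eq ?_)
    rw [← Finset.mul_sum, Finset.sum_comm]
    have : ∀ i : Fin d, ∑ x, (f x ^ 2 + f (x + ev i) ^ 2 / 2 + f (x - ev i) ^ 2 / 2
        - (f (x + ev i) - f x) ^ 2 / 4 - (f (x - ev i) - f x) ^ 2 / 4) =
        2 * ∑ x, f x ^ 2 - rho f (ev i) ^ 2 / 2 := by
      intro i
      have a1 := tr (fun x => f x ^ 2) (ev i)
      have a2 := tr' (fun x => f x ^ 2) (ev i)
      have a3 : ∑ x, (f (x - ev i) - f x) ^ 2 = rho f (ev i) ^ 2 := by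
        rw [rho_sq, ← tr' (fun x => (f (x + ev i) - f x) ^ 2) (ev i)]
        refine Finset.sum_congr rfl fun x _ => ?_
        simp only [sub_add_cancel]
        ring
      simp only [Finset.sum_add_distrib, Finset.sum_sub_distrib, ← Finset.sum_div, a1, a2, a3,
        ← rho_sq]
      ring
    simp only [this, Finset.sum_sub_distrib, ← Finset.sum_div]
    simp
    field_simp
    ring
  have h3 := poincare f hf
  refine h2.trans ?_
  have : 1 / (2 * (d : ℝ) ^ 2 * n ^ 2) * ∑ x, f x ^ 2 ≤ 1 / (4 * d) * ∑ i, rho f (ev i) ^ 2 := by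
    calc _ = 1 / (4 * (d : ℝ) ^ 2 * n ^ 2) * (2 * ∑ x, f x ^ 2) := by field_simp; ring
      _ ≤ 1 / (4 * (d : ℝ) ^ 2 * n ^ 2) * (d * n ^ 2 * ∑ i, rho f (ev i) ^ 2) := by gcongr
      _ = _ := by field_simp
  linarith

lemma sum_mulVec (hd : 3 ≤ d) (hn : 3 ≤ n) (f : (Fin d → ZMod n) → ℝ) :
    ∑ x, (lazyTorus d n).mulVec f x = ∑ x, f x := by
  simp only [Matrix.mulVec, dotProduct]
  rw [Finset.sum_comm]
  refine Finset.sum_congr rfl fun y _ => ?_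
  rw [← Finset.sum_mul]
  have := congrFun (lazy_one hd hn) y
  simp only [Matrix.mulVec, dotProduct, mul_one] at this
  rw [Finset.sum_congr rfl fun x _ => lazy_symm hn x y, this, one_mul]

lemma iter_contraction (hd : 3 ≤ d) (hn : 3 ≤ n) (f : (Fin d → ZMod n) → ℝ) (hf : ∑ x, f x = 0)
    (t : ℕ) : ∑ x, (lazyTorus d n ^ t).mulVec f x = 0 ∧
    ∑ x, (lazyTorus d n ^ t).mulVec f x ^ 2 ≤
      (1 - 1 / (2 * (d : ℝ) ^ 2 * n ^ 2)) ^ t * ∑ x, f x ^ 2 := by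
  induction t with
  | zero => simp [hf]
  | succ t ih =>
    rw [pow_succ' (lazyTorus d n), ← Matrix.mulVec_mulVec]
    refine ⟨by rw [sum_mulVec hd hn, ih.1], ?_⟩
    refine (contraction hd hn _ ih.1).trans ?_
    rw [pow_succ' (1 - 1 / (2 * (d : ℝ) ^ 2 * n ^ 2)), mul_assoc (1 - 1 / (2 * (d : ℝ) ^ 2 * n ^ 2))]
    refine mul_le_mul_of_nonneg_left ih.2 ?_
    have h1 : (1 : ℝ) ≤ d := by exact_mod_cast (by omega : 1 ≤ d)
    have h2 : (1 : ℝ) ≤ n := by exact_mod_cast (by omega : 1 ≤ n)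
    have : (1 : ℝ) ≤ 2 * (d : ℝ) ^ 2 * n ^ 2 := by
      nlinarith [one_le_pow₀ h1 (n := 2), one_le_pow₀ h2 (n := 2)]
    rw [sub_nonneg]
    exact (div_le_one (by linarith)).2 this

/-- Doeblin minorisation at the mixing time, in set form. -/
lemma mixing (hd : 3 ≤ d) (hn : 3 ≤ n) (S : Finset (Fin d → ZMod n)) (T : ℕ)
    (hT : 2 * (d : ℝ) ^ 2 * n ^ 2 * ((2 * d + 2) * Real.log n) ≤ T) (x : Fin d → ZMod n) :
    (lazyTorus d n ^ T).mulVec (fun y => if y ∈ S then 0 else 1) x ≤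
      1 - S.card / (2 * (n : ℝ) ^ d) := by
  classical
  set N : ℝ := (n : ℝ) ^ d with hN
  have hn0 : (0 : ℝ) < n := by positivity
  have hNpos : 0 < N := by positivity
  have hcard : (Fintype.card (Fin d → ZMod n) : ℝ) = N := by
    simp [hN, ZMod.card]
  set s : ℝ := (S.card : ℝ) with hs
  set a : ℝ := 1 - s / N with ha
  set b : (Fin d → ZMod n) → ℝ := fun y => if y ∈ S then 0 else 1 with hb
  have hbs : ∑ y, b y = N - s := by
    have : ∀ y, b y = 1 - if y ∈ S then 1 else 0 := by
      intro y; simp only [hb]; split_ifs <;> norm_num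
    simp only [this, Finset.sum_sub_distrib]
    simp [hs, ← hcard]
  have hb2 : ∀ y, b y ^ 2 = b y := by
    intro y; simp only [hb]; split_ifs <;> norm_num
  set f : (Fin d → ZMod n) → ℝ := fun y => b y - a with hf
  have hf0 : ∑ y, f y = 0 := by
    simp only [hf, Finset.sum_sub_distrib, hbs, Finset.sum_const, Finset.card_univ, nsmul_eq_mul,
      hcard, ha]
    field_simp
    ring
  have hs0 : 0 ≤ s := Nat.cast_nonneg _
  have hf2 : ∑ y, f y ^ 2 ≤ s ^ 2 := by
    have e : ∀ y, f y ^ 2 = b y * (1 - 2 * a) + a ^ 2 := by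
      intro y
      simp only [hf]
      linear_combination hb2 y
    have h1 : ∑ y, f y ^ 2 = s - s ^ 2 / N := by
      simp only [e, Finset.sum_add_distrib, ← Finset.sum_mul, hbs, Finset.sum_const,
        Finset.card_univ, nsmul_eq_mul, hcard, ha]
      field_simp
      ring
    have h2 : s ≤ s ^ 2 := by
      rw [hs]; exact_mod_cast Nat.le_self_pow two_ne_zero _
    have h3 : 0 ≤ s ^ 2 / N := by positivity
    linarith
  have hpow1 : ∀ t : ℕ, (lazyTorus d n ^ t).mulVec (fun _ => 1) = fun _ => 1 := by
    intro t
    induction t with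
    | zero => simp
    | succ t ih => rw [pow_succ, ← Matrix.mulVec_mulVec, lazy_one hd hn, ih]
  have hPf : (lazyTorus d n ^ T).mulVec f x = (lazyTorus d n ^ T).mulVec b x - a := by
    have : f = b - a • (fun _ => (1 : ℝ)) := by
      ext y; simp [hf]
    rw [this, Matrix.mulVec_sub, Matrix.mulVec_smul, hpow1]
    simp
  have h4 := (iter_contraction hd hn f hf0 T).2
  have h5 : (lazyTorus d n ^ T).mulVec f x ^ 2 ≤
      ∑ x, (lazyTorus d n ^ T).mulVec f x ^ 2 :=
    Finset.single_le_sum (f := fun x => (lazyTorus d n ^ T).mulVec f x ^ 2)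
      (fun _ _ => sq_nonneg _) (Finset.mem_univ x)
  have hd0 : (0 : ℝ) < d := by positivity
  set g : ℝ := 1 / (2 * (d : ℝ) ^ 2 * n ^ 2) with hg
  have hg1 : g ≤ 1 := by
    have h1 : (1 : ℝ) ≤ d := by exact_mod_cast (by omega : 1 ≤ d)
    have h2 : (1 : ℝ) ≤ n := by exact_mod_cast (by omega : 1 ≤ n)
    have : (1 : ℝ) ≤ 2 * (d : ℝ) ^ 2 * n ^ 2 := by
      nlinarith [one_le_pow₀ h1 (n := 2), one_le_pow₀ h2 (n := 2)]
    exact (div_le_one (by linarith)).2 this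
  have h6 : (1 - g) ^ T ≤ 1 / (2 * N) ^ 2 := by
    calc (1 - g) ^ T ≤ Real.exp (-g) ^ T := by
          have := Real.one_sub_le_exp_neg g
          have : 0 ≤ 1 - g := by linarith
          gcongr
      _ = Real.exp (-(g * T)) := by rw [← Real.exp_nat_mul]; congr 1; ring
      _ ≤ Real.exp (-((2 * d + 2) * Real.log n)) := by
          refine Real.exp_le_exp.2 (neg_le_neg ?_)
          rw [hg, one_div, ← div_eq_inv_mul, le_div_iff₀ (by positivity)]
          linarith
      _ = ((n : ℝ) ^ (2 * d + 2))⁻¹ := by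
          rw [Real.exp_neg]
          congr 1
          rw [show ((2 * d + 2 : ℝ)) = ((2 * d + 2 : ℕ) : ℝ) by push_cast; ring,
            Real.exp_nat_mul, Real.exp_log hn0]
      _ ≤ 1 / (2 * N) ^ 2 := by
          rw [one_div]
          gcongr
          rw [hN, pow_add, mul_pow, ← pow_mul, mul_comm d 2, mul_comm]
          have : (2 : ℝ) ≤ n := by exact_mod_cast (by omega : 2 ≤ n)
          gcongr
  have h7 : (lazyTorus d n ^ T).mulVec f x ^ 2 ≤ (s / (2 * N)) ^ 2 := by
    calc _ ≤ (1 - g) ^ T * ∑ y, f y ^ 2 := h5.trans h4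
      _ ≤ 1 / (2 * N) ^ 2 * s ^ 2 := by
          refine mul_le_mul h6 hf2 (Finset.sum_nonneg fun _ _ => sq_nonneg _) (by positivity)
      _ = _ := by rw [div_pow]; ring
  have h8 := abs_le_of_sq_le_sq' h7 (by positivity)
  have h9 := h8.2
  rw [hPf, ha] at h9
  have : s / N = 2 * (s / (2 * N)) := by field_simp
  linarith

end Helpers

section Path

variable {G : Type*} [Fintype G] [DecidableEq G]

open Classical in
/-- Kernel killed when leaving a point of `S`. -/
noncomputable def killed (P : Matrix G G ℝ) (S : Set G) : Matrix G G ℝ :=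
  Matrix.of fun z v => if z ∈ S then 0 else P z v

lemma killed_pow_nonneg (P : Matrix G G ℝ) (hP : ∀ x y, 0 ≤ P x y) (S : Set G) (t : ℕ) (x y : G) :
    0 ≤ (killed P S ^ t) x y := by
  induction t generalizing x y with
  | zero => simp [Matrix.one_apply]; split_ifs <;> norm_num
  | succ t ih =>
    rw [pow_succ', Matrix.mul_apply]
    refine Finset.sum_nonneg fun z _ => mul_nonneg ?_ (ih _ _)
    simp only [killed, Matrix.of_apply]
    split_ifs
    · exact le_rfl
    · exact hP _ _

variable [MeasurableSpace G]

lemma path_bound (P : Matrix G G ℝ) (hP : ∀ x y, 0 ≤ P x y) (μ : G → Measure (ℕ → G))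
    (hμ : IsMarkovChain P μ) (S : Set G) (y x : G) (t s : ℕ) (w : ℕ → G) :
    μ y {ω | (∀ i ≤ s, ω i = w i) ∧ (∀ j < t, ω (s + j) ∉ S) ∧ ω (s + t) = x} ≤
      ENNReal.ofReal (((if w 0 = y then 1 else 0) *
        ∏ i ∈ Finset.range s, P (w i) (w (i + 1))) * (killed P S ^ t) (w s) x) := by
  classical
  induction t generalizing s w with
  | zero =>
    by_cases h : w s = x
    · refine (measure_mono (t := {ω | ∀ i ≤ s, ω i = w i}) fun ω hω => hω.1).trans ?_
      rw [hμ.2 y s w]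
      simp [h]
    · have : {ω : ℕ → G | (∀ i ≤ s, ω i = w i) ∧ (∀ j < 0, ω (s + j) ∉ S) ∧ ω (s + 0) = x} = ∅ := by
        ext ω
        simp only [Set.mem_ofPred_eq, Set.mem_empty_iff_false, iff_false]
        rintro ⟨h1, -, h2⟩
        exact h (by rw [← h1 s le_rfl, ← h2]; rfl)
      rw [this]; simp
  | succ t ih =>
    by_cases hS : w s ∈ S
    · have : {ω : ℕ → G | (∀ i ≤ s, ω i = w i) ∧ (∀ j < t + 1, ω (s + j) ∉ S) ∧
          ω (s + (t + 1)) = x} = ∅ := by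
        ext ω
        simp only [Set.mem_ofPred_eq, Set.mem_empty_iff_false, iff_false]
        rintro ⟨h1, h2, -⟩
        refine h2 0 (by omega) ?_
        rw [add_zero, h1 s le_rfl]; exact hS
      rw [this]; simp
    · have hsub : {ω : ℕ → G | (∀ i ≤ s, ω i = w i) ∧ (∀ j < t + 1, ω (s + j) ∉ S) ∧
          ω (s + (t + 1)) = x} ⊆ ⋃ v ∈ (Finset.univ : Finset G),
          {ω | (∀ i ≤ s + 1, ω i = Function.update w (s + 1) v i) ∧
            (∀ j < t, ω (s + 1 + j) ∉ S) ∧ ω (s + 1 + t) = x} := by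
        rintro ω ⟨h1, h2, h3⟩
        simp only [Set.mem_iUnion, Finset.mem_univ, exists_prop, true_and]
        refine ⟨ω (s + 1), ?_, ?_, ?_⟩
        · intro i hi
          by_cases h : i = s + 1
          · subst h; simp
          · rw [Function.update_of_ne h]
            exact h1 i (by omega)
        · intro j hj
          have := h2 (j + 1) (by omega)
          rwa [show s + (j + 1) = s + 1 + j by ring] at this
        · rwa [show s + (t + 1) = s + 1 + t by ring] at h3
      refine (measure_mono hsub).trans ((measure_biUnion_finset_le _ _).trans ?_)
      refine (Finset.sum_le_sum fun v _ => ih (s + 1) (Function.update w (s + 1) v)).trans ?_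
      have hu : ∀ (v : G) (i), i ≤ s → Function.update w (s + 1) v i = w i := fun v i hi =>
        Function.update_of_ne (by omega) _ _
      have hprod : ∀ v : G, ∏ i ∈ Finset.range (s + 1), P (Function.update w (s + 1) v i)
          (Function.update w (s + 1) v (i + 1)) =
          (∏ i ∈ Finset.range s, P (w i) (w (i + 1))) * P (w s) v := by
        intro v
        rw [Finset.prod_range_succ, hu v s le_rfl, Function.update_self]
        congr 1
        refine Finset.prod_congr rfl fun i hi => ?_
        rw [Finset.mem_range] at hi
        rw [hu v i (by omega), hu v (i + 1) (by omega)]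
      rw [← ENNReal.ofReal_sum_of_nonneg]
      · refine ENNReal.ofReal_le_ofReal (le_of_eq ?_)
        rw [pow_succ', Matrix.mul_apply, Finset.mul_sum]
        refine Finset.sum_congr rfl fun v _ => ?_
        rw [hprod, hu v 0 (by omega), Function.update_self]
        simp only [killed, Matrix.of_apply, if_neg hS]
        ring
      · intro v _
        refine mul_nonneg (mul_nonneg (by split_ifs <;> norm_num)
          (Finset.prod_nonneg fun _ _ => hP _ _)) (killed_pow_nonneg P hP S _ _ _)

lemma harm_bound_s13 (P : Matrix G G ℝ) (hP : ∀ x y, 0 ≤ P x y) (μ : G → Measure (ℕ → G))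
    (hμ : IsMarkovChain P μ) (S : Set G) (y x : G) :
    μ y (hitsAt S x) ≤ ∑' t : ℕ, ENNReal.ofReal ((killed P S ^ t) y x) := by
  classical
  have hsub : hitsAt S x ⊆ ⋃ t : ℕ, ⋃ v ∈ (Finset.univ : Finset G),
      {ω | (∀ i ≤ 0, ω i = (fun _ => v : ℕ → G) i) ∧ (∀ j < t, ω (0 + j) ∉ S) ∧ ω (0 + t) = x} := by
    rintro ω ⟨t, h1, h2⟩
    simp only [Set.mem_iUnion, Finset.mem_univ, exists_prop, true_and]
    refine ⟨t, ω 0, ?_, ?_, ?_⟩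
    · intro i hi
      rw [Nat.le_zero.1 hi]
    · intro j hj hjS
      rw [zero_add] at hjS
      have : hit S ω ≤ (j : ℕ∞) := sInf_le ⟨j, hjS, rfl⟩
      rw [h1] at this
      have := Nat.cast_le.1 this
      omega
    · rw [zero_add]; exact h2
  refine (measure_mono hsub).trans ((measure_iUnion_le _).trans (ENNReal.tsum_le_tsum fun t => ?_))
  refine (measure_biUnion_finset_le _ _).trans ?_
  refine (Finset.sum_le_sum fun v _ => path_bound P hP μ hμ S y x t 0 (fun _ => v)).trans ?_
  rw [Finset.sum_eq_single y]
  · simp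
  · intro b _ hb
    simp [hb]
  · simp

/-- Green function bound for the killed walk. -/
lemma green_bound (P : Matrix G G ℝ) (hP : ∀ x y, 0 ≤ P x y) (hsym : ∀ x y, P x y = P y x)
    (hone : P.mulVec (fun _ => 1) = fun _ => 1) (S : Set G) (T : ℕ) (hT : 1 ≤ T) (δ : ℝ)
    (hδ : 0 < δ)
    (hmix : ∀ x, (P ^ T).mulVec (Sᶜ.indicator fun _ => 1) x ≤ 1 - δ) (M : ℕ) (x : G) :
    ∑ t ∈ Finset.range M, ∑ y, (killed P S ^ t) y x ≤ T / δ := by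
  classical
  set L : Matrix G G ℝ := (killed P S).transpose with hL
  have hLap : ∀ x v, L x v = if v ∈ S then 0 else P x v := by
    intro x v
    simp only [hL, Matrix.transpose_apply, killed, Matrix.of_apply, hsym v x]
  have hLnn : ∀ t x v, 0 ≤ (L ^ t) x v := by
    intro t x v
    rw [hL, ← Matrix.transpose_pow]
    exact killed_pow_nonneg P hP S t v x
  have hmono : ∀ t (f g : G → ℝ), (∀ z, f z ≤ g z) → ∀ z, (L ^ t).mulVec f z ≤ (L ^ t).mulVec g z := by
    intro t f g h z
    exact Finset.sum_le_sum fun v _ => mul_le_mul_of_nonneg_left (h v) (hLnn t z v)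
  have hc : ∀ t z, ∑ y, (killed P S ^ t) y z = (L ^ t).mulVec (fun _ => 1) z := by
    intro t z
    rw [hL, ← Matrix.transpose_pow]
    simp [Matrix.mulVec, dotProduct]
  have hLP : ∀ z v, L z v ≤ P z v := by
    intro z v
    rw [hLap]; split_ifs
    · exact hP _ _
    · exact le_rfl
  have hind : ∀ t z, 0 ≤ (P ^ t).mulVec (Sᶜ.indicator fun _ => (1 : ℝ)) z ∧
      (L ^ (t + 1)).mulVec (fun _ => 1) z ≤
      (P ^ (t + 1)).mulVec (Sᶜ.indicator fun _ => 1) z := by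
    intro t
    induction t with
    | zero =>
      intro z
      constructor
      · simp only [pow_zero, Matrix.one_mulVec]
        exact Set.indicator_nonneg (fun _ _ => zero_le_one) z
      · refine le_of_eq ?_
        simp only [zero_add, pow_one, Matrix.mulVec, dotProduct, hLap]
        refine Finset.sum_congr rfl fun v _ => ?_
        by_cases h : v ∈ S <;> simp [h]
    | succ t ih =>
      intro z
      have hnn : ∀ z, 0 ≤ (P ^ (t + 1)).mulVec (Sᶜ.indicator fun _ => (1 : ℝ)) z := by
        intro z
        rw [pow_succ', ← Matrix.mulVec_mulVec]
        exact Finset.sum_nonneg fun v _ => mul_nonneg (hP _ _) (ih v).1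
      refine ⟨hnn z, ?_⟩
      rw [pow_succ' L, pow_succ' P, ← Matrix.mulVec_mulVec, ← Matrix.mulVec_mulVec]
      refine Finset.sum_le_sum fun v _ => ?_
      exact (mul_le_mul_of_nonneg_left (ih v).2 (by simpa using hLnn 1 z v)).trans
        (mul_le_mul_of_nonneg_right (hLP z v) (hnn v))
  have hle1 : ∀ t z, (L ^ t).mulVec (fun _ => 1) z ≤ 1 := by
    intro t
    induction t with
    | zero => intro z; simp
    | succ t ih =>
      intro z
      rw [pow_succ', ← Matrix.mulVec_mulVec]
      calc _ ≤ P.mulVec (fun _ => 1) z := by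
            refine Finset.sum_le_sum fun v _ => ?_
            exact (mul_le_mul_of_nonneg_left (ih v) (by simpa using hLnn 1 z v)).trans
              (mul_le_mul_of_nonneg_right (hLP z v) zero_le_one)
        _ = 1 := by rw [hone]
  have hLT : ∀ z, (L ^ T).mulVec (fun _ => 1) z ≤ 1 - δ := by
    intro z
    obtain ⟨k, rfl⟩ : ∃ k, T = k + 1 := ⟨T - 1, by omega⟩
    exact (hind k z).2.trans (hmix z)
  simp only [hc]
  set c : ℕ → ℝ := fun t => (L ^ t).mulVec (fun _ => 1) x with hcdef
  have hc0 : ∀ t, 0 ≤ c t := fun t => Finset.sum_nonneg fun v _ => mul_nonneg (hLnn t x v) zero_le_one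
  have hcT : ∀ t, c (T + t) ≤ (1 - δ) * c t := by
    intro t
    simp only [hcdef]
    rw [add_comm, pow_add, ← Matrix.mulVec_mulVec]
    refine (hmono t _ (fun _ => 1 - δ) hLT x).trans (le_of_eq ?_)
    simp only [Matrix.mulVec, dotProduct, mul_one, Finset.mul_sum]
    exact Finset.sum_congr rfl fun _ _ => mul_comm _ _
  have h1 : ∑ t ∈ Finset.range M, c t ≤ ∑ t ∈ Finset.range (T + M), c t :=
    Finset.sum_le_sum_of_subset_of_nonneg (by
      intro t ht; rw [Finset.mem_range] at *; omega) fun t _ _ => hc0 t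
  rw [Finset.sum_range_add] at h1
  have h2 : ∑ t ∈ Finset.range T, c t ≤ T := by
    refine (Finset.sum_le_sum fun t _ => hle1 t x).trans ?_
    simp
  have h3 : ∑ t ∈ Finset.range M, c (T + t) ≤ (1 - δ) * ∑ t ∈ Finset.range M, c t := by
    rw [Finset.mul_sum]
    exact Finset.sum_le_sum fun t _ => hcT t
  rw [le_div_iff₀ hδ]
  linarith

lemma harm_sum_bound (P : Matrix G G ℝ) (hP : ∀ x y, 0 ≤ P x y) (μ : G → Measure (ℕ → G))
    (hμ : IsMarkovChain P μ) (S : Set G) (x : G) (B : ℝ) (hB0 : 0 ≤ B)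
    (hB : ∀ M, ∑ t ∈ Finset.range M, ∑ y, (killed P S ^ t) y x ≤ B) :
    ∑ y, harm μ S y x ≤ B := by
  have hfin : ∀ y, μ y (hitsAt S x) ≠ ⊤ := fun y => by
    have := hμ.1 y
    exact measure_ne_top _ _
  simp only [harm]
  rw [← ENNReal.toReal_sum fun y _ => hfin y]
  refine ENNReal.toReal_le_of_le_ofReal hB0 ?_
  refine (Finset.sum_le_sum fun y _ => harm_bound_s13 P hP μ hμ S y x).trans ?_
  rw [← Summable.tsum_finsetSum fun _ _ => ENNReal.summable]
  refine ENNReal.tsum_le_of_sum_range_le fun M => ?_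
  simp only [← ENNReal.ofReal_sum_of_nonneg fun y _ => killed_pow_nonneg P hP S _ y x]
  rw [← ENNReal.ofReal_sum_of_nonneg fun t _ =>
    Finset.sum_nonneg fun y _ => killed_pow_nonneg P hP S _ y x]
  exact ENNReal.ofReal_le_ofReal (hB M)

end Path

/-- There is `C > 0` (depending only on `d ≥ 3`) such that for all small enough
`ε > 0` and all large enough `n`: for the lazy simple random walk on `(ℤ/nℤ)^d`,
if `A ⊆ S` with `S` nonempty and `|A| ≤ (ε/(n² log n))·|S|`, then `h_S(A) ≤ C·ε`. -/
theorem stmt13 (d : ℕ) (hd : 3 ≤ d) :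
    ∃ C : ℝ, 0 < C ∧ ∃ ε₀ : ℝ, 0 < ε₀ ∧
      ∀ ε : ℝ, 0 < ε → ε ≤ ε₀ →
      ∃ n₀ : ℕ, ∀ (n : ℕ) [NeZero n], n₀ ≤ n →
        ∀ [MeasurableSpace (Fin d → ZMod n)]
          [MeasurableSingletonClass (Fin d → ZMod n)]
          (μ : (Fin d → ZMod n) → Measure (ℕ → Fin d → ZMod n)),
          IsMarkovChain (lazyTorus d n) μ →
          ∀ (A S : Set (Fin d → ZMod n)), A ⊆ S → S.Nonempty →
            (A.ncard : ℝ) ≤ ε / ((n : ℝ) ^ 2 * Real.log n) * (S.ncard : ℝ) →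
            ∑ x, A.indicator
                (harmStat (fun _ => ((Fintype.card (Fin d → ZMod n) : ℝ))⁻¹) μ S) x
              ≤ C * ε := by
  classical
  have hd0 : (0 : ℝ) < d := by positivity
  set K : ℝ := 2 * (d : ℝ) ^ 2 * (2 * d + 2) with hK
  have hK0 : 0 < K := by positivity
  refine ⟨2 * (K + 1), by positivity, 1, one_pos, fun ε hε _ => ⟨3, ?_⟩⟩
  intro n _ hn _ _ μ hμ A S hAS hSne hA
  have hn0 : (0 : ℝ) < n := by positivity
  have hlog : 1 ≤ Real.log n := by
    rw [Real.le_log_iff_exp_le hn0]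
    have h3 : (3 : ℝ) ≤ n := by exact_mod_cast hn
    linarith [Real.exp_one_lt_d9]
  set W : ℝ := (n : ℝ) ^ 2 * Real.log n with hW
  have hW1 : 1 ≤ W := by
    have h2 : (1 : ℝ) ≤ n := by exact_mod_cast (by omega : 1 ≤ n)
    nlinarith [one_le_pow₀ h2 (n := 2)]
  set T : ℕ := ⌈K * W⌉₊ with hT
  have hKW : 0 < K * W := by positivity
  have hT1 : 1 ≤ T := Nat.one_le_iff_ne_zero.2 (Nat.ceil_pos.2 hKW).ne'
  have hTle : (T : ℝ) ≤ (K + 1) * W := by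
    have := (Nat.ceil_lt_add_one hKW.le).le
    rw [← hT] at this
    linarith
  have hTge : 2 * (d : ℝ) ^ 2 * n ^ 2 * ((2 * d + 2) * Real.log n) ≤ T := by
    refine le_trans (le_of_eq ?_) (Nat.le_ceil (K * W))
    rw [hK, hW]; ring
  have hScard : (S.ncard : ℝ) = (S.toFinset.card : ℝ) := by rw [Set.ncard_eq_toFinset_card']
  have hSpos : (0 : ℝ) < S.ncard := by
    exact_mod_cast (Set.ncard_pos (Set.toFinite S)).2 hSne
  set N : ℝ := (n : ℝ) ^ d with hN
  have hNpos : 0 < N := by positivity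
  have hcard : (Fintype.card (Fin d → ZMod n) : ℝ) = N := by
    simp [hN, ZMod.card]
  set δ : ℝ := S.ncard / (2 * N) with hδ
  have hδ0 : 0 < δ := by positivity
  have hmix : ∀ x, (lazyTorus d n ^ T).mulVec (Sᶜ.indicator fun _ => 1) x ≤ 1 - δ := by
    intro x
    have := mixing hd hn S.toFinset T hTge x
    rw [← hScard] at this
    refine le_trans (le_of_eq ?_) this
    congr 1
    ext y
    by_cases h : y ∈ S <;> simp [h]
  have hsum : ∀ x, harmStat (fun _ => ((Fintype.card (Fin d → ZMod n) : ℝ))⁻¹) μ S x ≤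
      2 * T / S.ncard := by
    intro x
    rw [harmStat, ← Finset.mul_sum, hcard]
    have := harm_sum_bound (lazyTorus d n) lazy_nonneg μ hμ S x (T / δ) (by positivity)
      (fun M => green_bound (lazyTorus d n) lazy_nonneg (lazy_symm hn) (lazy_one hd hn) S T hT1 δ
        hδ0 hmix M x)
    calc _ ≤ N⁻¹ * (T / δ) := by gcongr
      _ = _ := by rw [hδ]; field_simp
  calc ∑ x, A.indicator
                (harmStat (fun _ => ((Fintype.card (Fin d → ZMod n) : ℝ))⁻¹) μ S) x
      ≤ ∑ x, A.indicator (fun _ => 2 * (T : ℝ) / S.ncard) x :=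
        Finset.sum_le_sum fun x _ => Set.indicator_le_indicator (hsum x)
    _ = A.ncard * (2 * (T : ℝ) / S.ncard) := by
        simp only [Set.indicator_apply]
        rw [← Finset.sum_filter, Finset.sum_const, nsmul_eq_mul, Set.ncard_eq_toFinset_card' A]
        have hfil : Finset.univ.filter (fun x => x ∈ A) = A.toFinset := by
          ext y
          simp
        rw [hfil]
    _ ≤ (ε / W * S.ncard) * (2 * ((K + 1) * W) / S.ncard) := by gcongr
    _ = 2 * (K + 1) * ε := by
        have : W ≠ 0 := by positivity
        field_simp

end HM
end

section
/- For every finite reversible, irreducible, aperiodic Markov chain as above, β(G) ≤ Φ(G); that is, there exists a nonempty set S ⊆ G with π(S) ≤ 1/2 and a subset A ⊆ S with h_S(A) ≥ 1/2 and π(A)/π(S) ≤ Φ(G). -/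
open MeasureTheory Finset
open scoped ENNReal

namespace HM

variable {G : Type*} [Fintype G] [DecidableEq G]

variable [MeasurableSpace G]

/-- The inner boundary of `S`: states of `S` reachable in one step from outside `S`. -/
def innerBoundary (P : Matrix G G ℝ) (S : Set G) : Set G :=
  {x ∈ S | ∃ y, y ∉ S ∧ 0 < P y x}

/-- The Cheeger constant `Φ(G) = min_{0 < π(S) ≤ 1/2} π(∂S)/π(S)`. -/
noncomputable def Phi (P : Matrix G G ℝ) (pi : G → ℝ) : ℝ :=
  sInf {r : ℝ | ∃ S : Set G, S.Nonempty ∧ piOf pi S ≤ 1 / 2 ∧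
    r = piOf pi (innerBoundary P S) / piOf pi S}

/-- `β(G) = min_{0 < π(S) ≤ 1/2} min_{A ⊆ S, h_S(A) ≥ 1/2} π(A)/π(S)`. -/
noncomputable def beta (pi : G → ℝ) (μ : G → Measure (ℕ → G)) : ℝ :=
  sInf {r : ℝ | ∃ S : Set G, S.Nonempty ∧ piOf pi S ≤ 1 / 2 ∧
    ∃ A ⊆ S, 1 / 2 ≤ ∑ x, A.indicator (harmStat pi μ S) x ∧
      r = piOf pi A / piOf pi S}



section helpers

variable {G : Type*} [Fintype G] [DecidableEq G]

/-- Probability (upper bound) of avoiding `S` for times `0..t`. -/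
noncomputable def qq (P : Matrix G G ℝ) (S : Set G) : ℕ → G → ℝ
  | 0 => Sᶜ.indicator (fun _ => 1)
  | t + 1 => Sᶜ.indicator (fun x => ∑ y, P x y * qq P S t y)

lemma qq_nonneg {P : Matrix G G ℝ} (hP : IsStochastic P) (S : Set G) (t : ℕ) (x : G) :
    0 ≤ qq P S t x := by
  induction t generalizing x with
  | zero => exact Set.indicator_nonneg (fun _ _ => zero_le_one) x
  | succ t ih =>
    exact Set.indicator_nonneg (fun x _ => Finset.sum_nonneg fun y _ =>
      mul_nonneg (hP.1 x y) (ih y)) x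

lemma qq_le_one {P : Matrix G G ℝ} (hP : IsStochastic P) (S : Set G) (t : ℕ) (x : G) :
    qq P S t x ≤ 1 := by
  induction t generalizing x with
  | zero => exact Set.indicator_le' (fun _ _ => le_rfl) (fun _ _ => zero_le_one) x
  | succ t ih =>
    refine Set.indicator_le' (f := fun x => ∑ y, P x y * qq P S t y) (g := fun _ => 1)
      (fun x _ => ?_) (fun _ _ => zero_le_one) x
    calc ∑ y, P x y * qq P S t y ≤ ∑ y, P x y * 1 :=
          Finset.sum_le_sum fun y _ => mul_le_mul_of_nonneg_left (ih y) (hP.1 x y)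
      _ = 1 := by simp [hP.2 x]

lemma qq_anti {P : Matrix G G ℝ} (hP : IsStochastic P) (S : Set G) (t : ℕ) (x : G) :
    qq P S (t + 1) x ≤ qq P S t x := by
  induction t generalizing x with
  | zero =>
    by_cases hx : x ∈ Sᶜ
    · have := qq_le_one hP S 1 x
      simpa [qq, Set.indicator_of_mem hx] using this
    · simp [qq, Set.indicator_of_notMem hx]
  | succ t ih =>
    by_cases hx : x ∈ Sᶜ
    · rw [qq, qq, Set.indicator_of_mem hx, Set.indicator_of_mem hx]
      exact Finset.sum_le_sum fun y _ => mul_le_mul_of_nonneg_left (ih y) (hP.1 x y)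
    · rw [qq, qq, Set.indicator_of_notMem hx, Set.indicator_of_notMem hx]

lemma qq_tendsto {P : Matrix G G ℝ} {pi : G → ℝ} (hP : IsStochastic P) (hirr : IsIrreducible P)
    (hrev : IsReversible P pi) (S : Set G) (hS : S.Nonempty) (x : G) :
    Filter.Tendsto (fun t => qq P S t x) Filter.atTop (nhds 0) := by
  have hex : ∀ x, ∃ l, Filter.Tendsto (fun t => qq P S t x) Filter.atTop (nhds l) := fun x =>
    ⟨_, tendsto_atTop_ciInf (antitone_nat_of_succ_le fun t => qq_anti hP S t x)
      ⟨0, by rintro _ ⟨t, rfl⟩; exact qq_nonneg hP S t x⟩⟩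
  choose q hq using hex
  have hq0 : ∀ x, 0 ≤ q x := fun x => ge_of_tendsto' (hq x) fun t => qq_nonneg hP S t x
  have hqS : ∀ x ∈ S, q x = 0 := by
    intro x hx
    refine tendsto_nhds_unique (hq x) ?_
    have : (fun t => qq P S t x) = fun _ => 0 := by
      funext t
      cases t <;> simp [qq, hx]
    rw [this]; exact tendsto_const_nhds
  have hqc : ∀ x ∉ S, q x = ∑ y, P x y * q y := by
    intro x hx
    refine tendsto_nhds_unique ((Filter.tendsto_add_atTop_iff_nat 1).2 (hq x)) ?_
    have : (fun t => qq P S (t + 1) x) = fun t => ∑ y, P x y * qq P S t y := by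
      funext t
      simp [qq, hx]
    rw [this]
    exact tendsto_finsetSum _ fun y _ => (hq y).const_mul _
  -- subharmonic, hence harmonic
  have hge : ∀ x, 0 ≤ (∑ y, P x y * q y) - q x := by
    intro x
    by_cases hx : x ∈ S
    · rw [hqS x hx, sub_zero]
      exact Finset.sum_nonneg fun y _ => mul_nonneg (hP.1 x y) (hq0 y)
    · rw [← hqc x hx, sub_self]
  have hsum : ∑ x, pi x * ((∑ y, P x y * q y) - q x) = 0 := by
    have h1 : ∑ x, pi x * ∑ y, P x y * q y = ∑ y, pi y * q y := by
      have h0 : ∑ x, pi x * ∑ y, P x y * q y = ∑ x, ∑ y, pi y * P y x * q y := by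
        refine Finset.sum_congr rfl fun x _ => ?_
        rw [Finset.mul_sum]
        refine Finset.sum_congr rfl fun y _ => ?_
        rw [← mul_assoc, hrev.2.2 x y]
      rw [h0, Finset.sum_comm]
      refine Finset.sum_congr rfl fun y _ => ?_
      rw [← Finset.sum_mul, ← Finset.mul_sum, hP.2 y, mul_one]
    simp_rw [mul_sub, Finset.sum_sub_distrib]
    rw [h1, sub_self]
  have hharm : P.mulVec q = q := by
    funext x
    have := (Finset.sum_eq_zero_iff_of_nonneg
      (fun x _ => mul_nonneg (hrev.1 x).le (hge x))).1 hsum x (Finset.mem_univ x)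
    have h2 := (mul_eq_zero.1 this).resolve_left (hrev.1 x).ne'
    simp only [Matrix.mulVec, dotProduct]
    linarith
  have hpow : ∀ t, (P ^ t).mulVec q = q := by
    intro t
    induction t with
    | zero => simp
    | succ t ih => rw [pow_succ, ← Matrix.mulVec_mulVec, hharm, ih]
  have hpn : ∀ t x y, 0 ≤ (P ^ t) x y := by
    intro t
    induction t with
    | zero => intro x y; rw [pow_zero, Matrix.one_apply]; split_ifs <;> norm_num
    | succ t ih =>
      intro x y
      rw [pow_succ, Matrix.mul_apply]
      exact Finset.sum_nonneg fun z _ => mul_nonneg (ih x z) (hP.1 z y)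
  obtain ⟨s, hs⟩ := hS
  obtain ⟨t, ht⟩ := hirr s x
  have h3 : ∑ y, (P ^ t) s y * q y = 0 := by
    have := congrFun (hpow t) s
    rw [hqS s hs] at this
    simpa [Matrix.mulVec, dotProduct] using this
  have h4 := (Finset.sum_eq_zero_iff_of_nonneg
      (fun y _ => mul_nonneg (hpn t s y) (hq0 y))).1 h3 x (Finset.mem_univ x)
  have h5 := (mul_eq_zero.1 h4).resolve_left ht.ne'
  rw [← h5]; exact hq x

variable [MeasurableSpace G]

lemma avoid_le {P : Matrix G G ℝ} {μ : G → Measure (ℕ → G)} (hP : IsStochastic P)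
    (hμ : IsMarkovChain P μ) (S : Set G) (y : G) (t : ℕ) : ∀ (k : ℕ) (w : ℕ → G),
    μ y {ω | (∀ i ≤ k, ω i = w i) ∧ ∀ j ≤ t, ω (k + j) ∉ S} ≤
      ENNReal.ofReal (((if w 0 = y then 1 else 0) *
        ∏ i ∈ Finset.range k, P (w i) (w (i + 1))) * qq P S t (w k)) := by
  induction t with
  | zero =>
    intro k w
    by_cases hk : w k ∈ S
    · have : {ω : ℕ → G | (∀ i ≤ k, ω i = w i) ∧ ∀ j ≤ 0, ω (k + j) ∉ S} = ∅ := by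
        ext ω
        simp only [Set.mem_setOf_eq, Set.mem_empty_iff_false, iff_false, not_and]
        intro h h'
        have := h' 0 le_rfl
        rw [add_zero, h k le_rfl] at this
        exact this hk
      rw [this]; simp
    · simp only [qq, Set.indicator_of_mem (show w k ∈ Sᶜ from hk), mul_one]
      rw [← hμ.2 y k w]
      exact measure_mono fun ω h => h.1
  | succ t ih =>
    intro k w
    by_cases hk : w k ∈ S
    · have : {ω : ℕ → G | (∀ i ≤ k, ω i = w i) ∧ ∀ j ≤ t + 1, ω (k + j) ∉ S} = ∅ := by
        ext ω
        simp only [Set.mem_setOf_eq, Set.mem_empty_iff_false, iff_false, not_and]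
        intro h h'
        have := h' 0 (Nat.zero_le _)
        rw [add_zero, h k le_rfl] at this
        exact this hk
      rw [this]; simp
    · set c : ℝ := (if w 0 = y then 1 else 0) *
        ∏ i ∈ Finset.range k, P (w i) (w (i + 1)) with hc
      have hc0 : 0 ≤ c := mul_nonneg (by split_ifs <;> norm_num)
        (Finset.prod_nonneg fun i _ => hP.1 _ _)
      calc μ y {ω | (∀ i ≤ k, ω i = w i) ∧ ∀ j ≤ t + 1, ω (k + j) ∉ S}
          ≤ μ y (⋃ z ∈ (Finset.univ : Finset G),
            {ω | (∀ i ≤ k + 1, ω i = (Function.update w (k + 1) z) i) ∧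
              ∀ j ≤ t, ω (k + 1 + j) ∉ S}) := by
            refine measure_mono fun ω h => ?_
            simp only [Set.mem_iUnion]
            refine ⟨ω (k + 1), Finset.mem_univ _, fun i hi => ?_, fun j hj => ?_⟩
            · rcases Nat.lt_or_ge k i with h1 | h1
              · have : i = k + 1 := by omega
                subst this; simp
              · rw [Function.update_of_ne (by omega)]; exact h.1 i h1
            · have := h.2 (j + 1) (by omega)
              rwa [show k + 1 + j = k + (j + 1) by omega]
        _ ≤ ∑ z, μ y {ω | (∀ i ≤ k + 1, ω i = (Function.update w (k + 1) z) i) ∧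
              ∀ j ≤ t, ω (k + 1 + j) ∉ S} := measure_biUnion_finset_le _ _
        _ ≤ ∑ z, ENNReal.ofReal (c * (P (w k) z * qq P S t z)) := by
            refine Finset.sum_le_sum fun z _ => (ih (k + 1) _).trans (le_of_eq ?_)
            congr 1
            rw [Finset.prod_range_succ, Function.update_self, Function.update_of_ne (by omega),
              Function.update_of_ne (by omega), ← mul_assoc, ← mul_assoc, hc]
            congr 3
            refine Finset.prod_congr rfl fun i hi => ?_
            have := Finset.mem_range.1 hi
            rw [Function.update_of_ne (by omega), Function.update_of_ne (by omega)]
        _ = ENNReal.ofReal (c * qq P S (t + 1) (w k)) := by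
            rw [← ENNReal.ofReal_sum_of_nonneg
              (fun z _ => mul_nonneg hc0 (mul_nonneg (hP.1 _ _) (qq_nonneg hP S t z))),
              ← Finset.mul_sum]
            simp [qq, hk]

lemma never_null {P : Matrix G G ℝ} {pi : G → ℝ} {μ : G → Measure (ℕ → G)}
    (hP : IsStochastic P) (hirr : IsIrreducible P)
    (hrev : IsReversible P pi) (hμ : IsMarkovChain P μ) (S : Set G) (hS : S.Nonempty) (y : G) :
    μ y {ω | ω 0 = y ∧ ∀ n, ω n ∉ S} = 0 := by
  have h1 : ∀ t, μ y {ω | ω 0 = y ∧ ∀ n, ω n ∉ S} ≤ ENNReal.ofReal (qq P S t y) := by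
    intro t
    have := avoid_le hP hμ S y t 0 (fun _ => y)
    simp only [if_true, Finset.range_zero, Finset.prod_empty, mul_one, one_mul] at this
    refine le_trans (measure_mono ?_) this
    intro ω h
    refine ⟨fun i hi => ?_, fun j _ => h.2 _⟩
    rw [Nat.le_zero.1 hi]; exact h.1
  have h2 := ENNReal.tendsto_ofReal (qq_tendsto hP hirr hrev S hS y)
  rw [ENNReal.ofReal_zero] at h2
  exact le_antisymm (ge_of_tendsto' h2 h1) bot_le

lemma null_of_cyl (ν : Measure (ℕ → G)) (t : ℕ) (B : Set (ℕ → G))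
    (h : ∀ w ∈ B, ν {ω | ∀ i ≤ t, ω i = w i} = 0) : ν B = 0 := by
  have hB : B ⊆ ⋃ v : Fin (t + 1) → G, B ∩ {ω | ∀ i : Fin (t + 1), ω i = v i} := by
    intro ω hω
    exact Set.mem_iUnion.2 ⟨fun i => ω i, hω, fun i => rfl⟩
  refine measure_mono_null hB (measure_iUnion_null fun v => ?_)
  rcases Set.eq_empty_or_nonempty (B ∩ {ω | ∀ i : Fin (t + 1), ω i = v i}) with he | ⟨w, hw, hv⟩
  · rw [he]; simp
  · refine measure_mono_null ?_ (h w hw)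
    intro ω hω i hi
    have h1 := hω.2 ⟨i, by omega⟩
    have h2 := hv ⟨i, by omega⟩
    simp only at h1 h2
    rw [h1, h2]

lemma harm_boundary {P : Matrix G G ℝ} {pi : G → ℝ} {μ : G → Measure (ℕ → G)}
    (hP : IsStochastic P) (hirr : IsIrreducible P)
    (hrev : IsReversible P pi) (hμ : IsMarkovChain P μ) (S : Set G) (hS : S.Nonempty) (y : G)
    (hy : y ∉ S) : 1 ≤ ∑ x, (innerBoundary P S).indicator (harm μ S y) x := by
  classical
  haveI := hμ.1 y
  set F : Finset G := Finset.univ.filter (· ∈ innerBoundary P S) with hF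
  have hcov : (Set.univ : Set (ℕ → G)) ⊆ (⋃ x ∈ F, hitsAt S x) ∪
      ({ω | ω 0 = y ∧ ∀ n, ω n ∉ S} ∪ ({ω | ω 0 ≠ y} ∪ ⋃ n, {ω | P (ω n) (ω (n + 1)) = 0})) := by
    intro ω _
    by_cases h0 : ω 0 = y
    swap
    · exact Or.inr (Or.inr (Or.inl h0))
    by_cases hn : ∀ n, ω n ∉ S
    · exact Or.inr (Or.inl ⟨h0, hn⟩)
    by_cases hb : ∃ n, P (ω n) (ω (n + 1)) = 0
    · exact Or.inr (Or.inr (Or.inr (Set.mem_iUnion.2 hb)))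
    push Not at hn hb
    left
    obtain ⟨m, hm⟩ : ∃ m, Nat.find hn = m + 1 := by
      refine Nat.exists_eq_succ_of_ne_zero fun hz => ?_
      have := Nat.find_spec hn
      rw [hz, h0] at this
      exact hy this
    have hin : ω (m + 1) ∈ S := hm ▸ Nat.find_spec hn
    have hout : ω m ∉ S := Nat.find_min hn (by omega)
    simp only [Set.mem_iUnion]
    refine ⟨ω (m + 1), ?_, m + 1, ?_, rfl⟩
    · rw [hF, Finset.mem_filter]
      exact ⟨Finset.mem_univ _, hin, ω m, hout, lt_of_le_of_ne (hP.1 _ _) (hb m).symm⟩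
    · refine le_antisymm (sInf_le ⟨m + 1, hin, rfl⟩) (le_sInf ?_)
      rintro _ ⟨n, hnS, rfl⟩
      have := Nat.find_min' hn hnS
      rw [hm] at this
      exact_mod_cast this
  have hb0 : μ y {ω | ω 0 ≠ y} = 0 := by
    refine null_of_cyl _ 0 _ fun w hw => ?_
    rw [hμ.2, if_neg hw]; simp
  have hbn : μ y (⋃ n, {ω | P (ω n) (ω (n + 1)) = 0}) = 0 := by
    refine measure_iUnion_null fun n => null_of_cyl _ (n + 1) _ fun w hw => ?_
    rw [hμ.2, Finset.prod_range_succ, show P (w n) (w (n + 1)) = 0 from hw]; simp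
  have hnull := measure_union_null (never_null hP hirr hrev hμ S hS y)
    (measure_union_null hb0 hbn)
  have h1 : (1 : ℝ≥0∞) ≤ ∑ x ∈ F, μ y (hitsAt S x) := by
    calc (1 : ℝ≥0∞) = μ y Set.univ := measure_univ.symm
      _ ≤ _ := measure_mono hcov
      _ ≤ _ := measure_union_le _ _
      _ = μ y (⋃ x ∈ F, hitsAt S x) := by rw [hnull, add_zero]
      _ ≤ _ := measure_biUnion_finset_le _ _
  have h2 : ∑ x, (innerBoundary P S).indicator (harm μ S y) x
      = (∑ x ∈ F, μ y (hitsAt S x)).toReal := by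
    rw [ENNReal.toReal_sum (fun x _ => measure_ne_top _ _), hF, Finset.sum_filter]
    exact Finset.sum_congr rfl fun x _ => by simp [Set.indicator_apply, harm]
  rw [h2]
  have := ENNReal.toReal_mono (ENNReal.sum_ne_top.2 fun x _ => measure_ne_top _ _) h1
  simpa using this

lemma harmStat_boundary {P : Matrix G G ℝ} {pi : G → ℝ} {μ : G → Measure (ℕ → G)}
    (hP : IsStochastic P) (hirr : IsIrreducible P)
    (hrev : IsReversible P pi) (hμ : IsMarkovChain P μ) (S : Set G) (hS : S.Nonempty)
    (hS2 : piOf pi S ≤ 1 / 2) :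
    1 / 2 ≤ ∑ x, (innerBoundary P S).indicator (harmStat pi μ S) x := by
  classical
  have h1 : ∑ x, (innerBoundary P S).indicator (harmStat pi μ S) x
      = ∑ y, pi y * ∑ x, (innerBoundary P S).indicator (harm μ S y) x := by
    simp_rw [Finset.mul_sum]
    rw [Finset.sum_comm]
    refine Finset.sum_congr rfl fun x _ => ?_
    by_cases hx : x ∈ innerBoundary P S <;> simp [hx, harmStat]
  have h2 : ∑ y, (pi y - S.indicator pi y) ≤
      ∑ y, pi y * ∑ x, (innerBoundary P S).indicator (harm μ S y) x := by
    refine Finset.sum_le_sum fun y _ => ?_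
    by_cases hy : y ∈ S
    · rw [Set.indicator_of_mem hy, sub_self]
      exact mul_nonneg (hrev.1 y).le (Finset.sum_nonneg fun x _ =>
        Set.indicator_nonneg (fun x _ => ENNReal.toReal_nonneg) x)
    · rw [Set.indicator_of_notMem hy, sub_zero]
      exact le_mul_of_one_le_right (hrev.1 y).le (harm_boundary hP hirr hrev hμ S hS y hy)
  rw [Finset.sum_sub_distrib, hrev.2.1] at h2
  unfold piOf at hS2
  rw [h1]; linarith

end helpers

/-- `β(G) ≤ Φ(G)`: there is a nonempty `S` with `π(S) ≤ 1/2` and `A ⊆ S` with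
`h_S(A) ≥ 1/2` and `π(A)/π(S) ≤ Φ(G)`. -/
theorem stmt15 {G : Type*} [Fintype G] [DecidableEq G] [MeasurableSpace G] [MeasurableSingletonClass G]
    (P : Matrix G G ℝ) (pi : G → ℝ) (μ : G → Measure (ℕ → G))
    (hP : IsStochastic P) (hirr : IsIrreducible P) (hap : IsAperiodic P)
    (hrev : IsReversible P pi) (hμ : IsMarkovChain P μ)
    (hcard : 2 ≤ Fintype.card G) :
    beta pi μ ≤ Phi P pi ∧
      ∃ S : Set G, S.Nonempty ∧ piOf pi S ≤ 1 / 2 ∧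
        ∃ A ⊆ S, 1 / 2 ≤ ∑ x, A.indicator (harmStat pi μ S) x ∧
          piOf pi A / piOf pi S ≤ Phi P pi := by
  classical
  have hpos : ∀ S : Set G, 0 ≤ piOf pi S := fun S =>
    Finset.sum_nonneg fun x _ => Set.indicator_nonneg (fun x _ => (hrev.1 x).le) x
  have hex : ∃ S : Set G, S.Nonempty ∧ piOf pi S ≤ 1 / 2 := by
    obtain ⟨a, b, hab⟩ := Fintype.one_lt_card_iff.1 (show 1 < Fintype.card G by omega)
    have hone : ∀ c, piOf pi {c} = pi c := by
      intro c
      simp [piOf, Set.indicator_apply]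
    have hle : pi a + pi b ≤ 1 := by
      rw [← hrev.2.1, ← Finset.sum_pair hab]
      exact Finset.sum_le_sum_of_subset_of_nonneg (Finset.subset_univ _)
        fun x _ _ => (hrev.1 x).le
    rcases le_total (pi a) (pi b) with h | h
    · exact ⟨{a}, Set.singleton_nonempty a, by rw [hone]; linarith⟩
    · exact ⟨{b}, Set.singleton_nonempty b, by rw [hone]; linarith⟩
  have hmem : Phi P pi ∈ {r : ℝ | ∃ S : Set G, S.Nonempty ∧ piOf pi S ≤ 1 / 2 ∧
      r = piOf pi (innerBoundary P S) / piOf pi S} := by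
    refine Set.Nonempty.csInf_mem ?_ ?_
    · obtain ⟨S, h1, h2⟩ := hex
      exact ⟨_, S, h1, h2, rfl⟩
    · refine (Set.finite_range
        (fun S : Set G => piOf pi (innerBoundary P S) / piOf pi S)).subset ?_
      rintro r ⟨S, -, -, rfl⟩
      exact ⟨S, rfl⟩
  obtain ⟨S, hS, hS2, hr⟩ := hmem
  have hsub : innerBoundary P S ⊆ S := fun x hx => hx.1
  have hh := harmStat_boundary hP hirr hrev hμ S hS hS2
  refine ⟨?_, S, hS, hS2, innerBoundary P S, hsub, hh, hr.ge⟩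
  refine csInf_le ⟨0, ?_⟩ ⟨S, hS, hS2, innerBoundary P S, hsub, hh, hr⟩
  rintro r ⟨S, -, -, A, -, -, rfl⟩
  exact div_nonneg (hpos _) (hpos _)

end HM
end
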